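/- arXiv:2605.01590 — 2 statements merged into one kernel-verified Lean document; each statement's English description precedes it below -/
import Mathlib

section
/- Fix an odd integer c ≥ 5 and relator words R_x ∈ {x³, x³·s_c⁻¹}, R_y ∈ {y³·s₃⁻²·s₄⁻¹, y³·s₃⁻²·s₄⁻¹·s_c⁻¹, y³·s₃⁻²·s₄⁻¹·s_c⁻²}, and let G = G_Q(c, R_x, R_y). Then G admits an automorphism σ with σ ∘ σ = id and σ ≠ id which acts as inversion on the quotient of G by the subgroup generated by all cubes and all commutators; that is, for every g ∈ G, the element σ(g)·g lies in the (normal) subgroup of G generated by {h³ : h ∈ G} together with the commutator subgroup [G,G]. -/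
/-- The commutator `[g,h] = g⁻¹h⁻¹gh`. -/
def fcomm {G : Type*} [Group G] (g h : G) : G := g⁻¹ * h⁻¹ * g * h

namespace GQdef

/-- The generator `x` (as a word in the free group). -/
def xw : FreeGroup ℕ := FreeGroup.of 0

/-- The generator `y`. -/
def yw : FreeGroup ℕ := FreeGroup.of 1

/-- The generator `t₃`. -/
def t3w : FreeGroup ℕ := FreeGroup.of 2

/-- The generator `s_j` (meaningful for `2 ≤ j ≤ c`). -/
def sw (j : ℕ) : FreeGroup ℕ := FreeGroup.of (j + 1)

/-- The defining relators of `G_Q(c, R_x, R_y)`: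
`s₂ = [y,x]`, `t₃ = [s₂,y]`, `s_j = [s_{j−1},x]` for `3 ≤ j ≤ c`,
`s_j³ = s_{j+2}²·s_{j+3}` for `2 ≤ j ≤ c−3`, `s_{c−2}³ = s_c²`, `t₃³ = 1`,
`R_x = 1`, `R_y = 1`.  (The superfluous generators `FreeGroup.of n` with
`n ≥ c+2` are killed, so that the effective generators are exactly
`x, y, t₃, s₂, …, s_c`.) -/
def rels (c : ℕ) (Rx Ry : FreeGroup ℕ) : Set (FreeGroup ℕ) :=
  {sw 2 * (fcomm yw xw)⁻¹, t3w * (fcomm (sw 2) yw)⁻¹, t3w ^ 3,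
    sw (c - 2) ^ 3 * (sw c ^ 2)⁻¹, Rx, Ry} ∪
  {w | ∃ j : ℕ, 3 ≤ j ∧ j ≤ c ∧ w = sw j * (fcomm (sw (j - 1)) xw)⁻¹} ∪
  {w | ∃ j : ℕ, 2 ≤ j ∧ j ≤ c - 3 ∧ w = sw j ^ 3 * (sw (j + 2) ^ 2 * sw (j + 3))⁻¹} ∪
  {w | ∃ n : ℕ, c + 2 ≤ n ∧ w = FreeGroup.of n}

/-- The group `G_Q(c, R_x, R_y)`. -/
abbrev GQ (c : ℕ) (Rx Ry : FreeGroup ℕ) : Type := PresentedGroup (rels c Rx Ry)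

/-- The two admissible relator words `R_x ∈ {x³, x³·s_c⁻¹}`. -/
def RxSet (c : ℕ) : Set (FreeGroup ℕ) := {xw ^ 3, xw ^ 3 * (sw c)⁻¹}

/-- The three admissible relator words
`R_y ∈ {y³·s₃⁻²·s₄⁻¹, y³·s₃⁻²·s₄⁻¹·s_c⁻¹, y³·s₃⁻²·s₄⁻¹·s_c⁻²}`. -/
def RySet (c : ℕ) : Set (FreeGroup ℕ) :=
  {yw ^ 3 * (sw 3 ^ 2)⁻¹ * (sw 4)⁻¹,
   yw ^ 3 * (sw 3 ^ 2)⁻¹ * (sw 4)⁻¹ * (sw c)⁻¹,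
   yw ^ 3 * (sw 3 ^ 2)⁻¹ * (sw 4)⁻¹ * (sw c ^ 2)⁻¹}

end GQdef

open GQdef

section CyclicTriple

variable {G : Type*} [Group G] {a b c u : G}

/-- The three cyclic shifts of `b a² c = a` force `⟨a, b⟩` to be nilpotent of class two. -/
theorem exists_central_of_cyclic_rel (h₁ : b * a * a * c = a) (h₂ : c * b * b * a = b)
    (h₃ : a * c * c * b = c) :
    ∃ u : G, Commute u a ∧ Commute u b ∧ a * b = u * b * a ∧ c = u * a⁻¹ * b⁻¹ := by
  have hc : c = a⁻¹ * a⁻¹ * b⁻¹ * a := by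
    calc c = a⁻¹ * a⁻¹ * b⁻¹ * (b * a * a * c) := by group
      _ = _ := by rw [h₁]
  subst hc
  have hb : a * b * a⁻¹ * b = b * (a * b * a⁻¹) := by
    calc a * b * a⁻¹ * b = b * a * b * a⁻¹ * b⁻¹ * (b * a * a *
          (a * (a⁻¹ * a⁻¹ * b⁻¹ * a) * (a⁻¹ * a⁻¹ * b⁻¹ * a) * b)) * a⁻¹ * b := by
          simp [mul_assoc]
      _ = b * (a * b * a⁻¹) := by rw [h₃]; simp [mul_assoc]
  have ha : a * b * b * a = b * a * a * b := by
    calc a * b * b * a = b * a * a * (a⁻¹ * a⁻¹ * b⁻¹ * a * b * b * a) := by group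
      _ = _ := by rw [h₂]
  obtain ⟨u, hab⟩ : ∃ u, a * b = u * b * a := ⟨a * b * a⁻¹ * b⁻¹, by group⟩
  have hub : Commute u b := by
    have : a * b * a⁻¹ = u * b := by rw [hab]; group
    rw [this] at hb
    refine mul_right_cancel (b := b) ?_
    rw [hb, mul_assoc]
  have hua : Commute u a := by
    refine (mul_left_cancel (a := b) (mul_right_cancel (b := b * a) ?_)).symm
    calc b * (a * u) * (b * a) = b * a * (u * b * a) := by simp only [mul_assoc]
      _ = a * b * b * a := by rw [← hab, ha]; simp only [mul_assoc]
      _ = (u * b) * (u * b) * (a * a) := by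
        rw [hab, mul_assoc (u * b) a b, hab]; simp only [mul_assoc]
      _ = b * u * (b * u) * (a * a) := by rw [hub.eq]
      _ = b * u * (u * b) * (a * a) := by rw [hub.eq]
      _ = b * (u * (u * b * a) * a) := by simp only [mul_assoc]
      _ = b * (u * a) * (b * a) := by rw [← hab]; simp only [mul_assoc]
  refine ⟨u, hua, hub, hab, ?_⟩
  calc a⁻¹ * a⁻¹ * b⁻¹ * a = a⁻¹ * a⁻¹ * b⁻¹ * (a * b) * b⁻¹ := by group
    _ = a⁻¹ * a⁻¹ * b⁻¹ * (u * b) * a * b⁻¹ := by rw [hab]; simp only [mul_assoc]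
    _ = a⁻¹ * a⁻¹ * (u * a) * b⁻¹ := by rw [hub.eq]; simp [mul_assoc]
    _ = a⁻¹ * u * b⁻¹ := by rw [hua.eq]; simp [mul_assoc]
    _ = u * a⁻¹ * b⁻¹ := by rw [hua.inv_right.eq]

/-- In a class-two group with commutator of order three, cubing is multiplicative. -/
theorem mul_cube_of_central (hua : Commute u a) (hub : Commute u b) (hab : a * b = u * b * a)
    (hu : u ^ 3 = 1) : (a * b) ^ 3 = a ^ 3 * b ^ 3 ∧ Commute (a ^ 3) b := by
  have ab (t : G) : a * (b * t) = u * (b * (a * t)) := by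
    rw [← mul_assoc, hab]; simp only [mul_assoc]
  have au (t : G) : a * (u * t) = u * (a * t) := hua.symm.left_comm t
  have bu (t : G) : b * (u * t) = u * (b * t) := hub.symm.left_comm t
  have hu' (t : G) : u * (u * (u * t)) = t := by
    simpa [pow_succ, mul_assoc] using congrArg (· * t) hu
  have hab' : a * b = u * (b * a) := by rw [hab, mul_assoc]
  constructor
  · simp only [pow_succ, pow_zero, one_mul, mul_assoc, ab, au, bu, hu', hab']
  · change a ^ 3 * b = b * a ^ 3
    simp only [pow_succ, pow_zero, one_mul, mul_assoc, hu', hab', ab, au]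

/-- If `a b c = 1` in addition to the cyclic relations, squares are central in `⟨a, b⟩`. -/
theorem commute_sq_of_cyclic_rel (h₀ : a * b * c = 1) (h₁ : b * a * a * c = a) :
    Commute (a * a) b := by
  have hc : c = b⁻¹ * a⁻¹ := by
    rw [← mul_inv_rev]; exact eq_inv_of_mul_eq_one_right h₀
  subst hc
  refine mul_right_cancel (b := b⁻¹ * a⁻¹) ?_
  calc a * a * b * (b⁻¹ * a⁻¹) = a := by group
    _ = b * a * a * (b⁻¹ * a⁻¹) := h₁.symm
    _ = _ := by simp only [mul_assoc]

/-- If moreover `(a⁻¹ b)²` commutes with `b⁻¹ c`, the commutator of `a` and `b` has order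
dividing six. -/
theorem pow_six_of_cyclic_rel (hua : Commute u a) (hub : Commute u b) (hab : a * b = u * b * a)
    (hc : c = u * a⁻¹ * b⁻¹) (h : Commute ((a⁻¹ * b) * (a⁻¹ * b)) (b⁻¹ * c)) : u ^ 6 = 1 := by
  subst hc
  have ab (t : G) : a * (b * t) = u * (b * (a * t)) := by
    rw [← mul_assoc, hab]; simp only [mul_assoc]
  have bu (t : G) : b * (u * t) = u * (b * t) := hub.symm.left_comm t
  have aib (t : G) : a⁻¹ * (b * t) = u⁻¹ * (b * (a⁻¹ * t)) := by
    rw [inv_mul_eq_iff_eq_mul, hua.symm.inv_right.left_comm, ab]; simp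
  have abi (t : G) : a * (b⁻¹ * t) = u⁻¹ * (b⁻¹ * (a * t)) := by
    have := ab (b⁻¹ * t)
    rw [mul_inv_cancel_left] at this
    rw [this, hub.inv_right.symm.left_comm, inv_mul_cancel_left, inv_mul_cancel_left]
  have aibi (t : G) : a⁻¹ * (b⁻¹ * t) = u * (b⁻¹ * (a⁻¹ * t)) := by
    rw [inv_mul_eq_iff_eq_mul, hua.symm.left_comm, abi]; simp
  have aiu (t : G) : a⁻¹ * (u * t) = u * (a⁻¹ * t) := hua.symm.inv_left.left_comm t
  have biu (t : G) : b⁻¹ * (u * t) = u * (b⁻¹ * t) := hub.symm.inv_left.left_comm t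
  have aiui (t : G) : a⁻¹ * (u⁻¹ * t) = u⁻¹ * (a⁻¹ * t) := hua.symm.inv_inv.left_comm t
  have biui (t : G) : b⁻¹ * (u⁻¹ * t) = u⁻¹ * (b⁻¹ * t) := hub.symm.inv_inv.left_comm t
  have key := congrArg (· * (1 : G)) h.eq
  simp only [mul_assoc, aib, aibi, bu, aiu, biu, aiui, biui, inv_mul_cancel_left,
    mul_inv_cancel_left] at key
  generalize a⁻¹ * (a⁻¹ * (a⁻¹ * 1)) = g at key
  have h6 : u ^ 6 * g = g := by
    simpa [pow_succ, mul_assoc, eq_inv_mul_iff_mul_eq] using key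
  exact mul_eq_right.mp h6

end CyclicTriple

section CommSeq

variable {G : Type*} [Group G]

/-- The iterated commutators `y, [y,x], [[y,x],x], …`. -/
def commSeq (x y : G) : ℕ → G
  | 0 => y
  | n + 1 => fcomm (commSeq x y n) x

/-- Conjugation `g ↦ x⁻¹ g x`. -/
def conjHom (x : G) : G →* G := (MulAut.conj x⁻¹).toMonoidHom

theorem conjHom_apply (x g : G) : conjHom x g = x⁻¹ * g * x := by
  simp [conjHom]

theorem conjHom_conjHom_conjHom {x g : G} (h : Commute (x ^ 3) g) :
    conjHom x (conjHom x (conjHom x g)) = g := by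
  calc conjHom x (conjHom x (conjHom x g)) = (x ^ 3)⁻¹ * (g * x ^ 3) := by
        simp [conjHom_apply, pow_succ, mul_assoc]
    _ = g := by rw [← h.eq]; simp

theorem commSeq_succ (x y : G) (n : ℕ) :
    commSeq x y (n + 1) = (commSeq x y n)⁻¹ * conjHom x (commSeq x y n) := by
  simp [commSeq, fcomm, conjHom_apply, mul_assoc]

theorem conjHom_commSeq (x y : G) (n : ℕ) :
    conjHom x (commSeq x y n) = commSeq x y n * commSeq x y (n + 1) := by
  simp [commSeq_succ]

/-- If `x³` centralizes `a = s_i`, the cube relation reads `b a² c = a` with `b = aˣ`, `c = bˣ`. -/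
theorem cyclic_rel_of_cube {x y : G} {i : ℕ} (hx : Commute (x ^ 3) (commSeq x y i))
    (h : commSeq x y i ^ 3 = commSeq x y (i + 2) ^ 2 * commSeq x y (i + 3)) :
    conjHom x (commSeq x y i) * commSeq x y i * commSeq x y i *
      conjHom x (conjHom x (commSeq x y i)) = commSeq x y i := by
  have h3 := conjHom_conjHom_conjHom hx
  set a := commSeq x y i
  have h' : a ^ 3 = commSeq x y (i + 2) * conjHom x (commSeq x y (i + 2)) := by
    rw [h, conjHom_commSeq, pow_two, mul_assoc]
  simp only [commSeq_succ x y (i + 1), commSeq_succ x y i, map_mul, map_inv] at h'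
  change a ^ 3 = (a⁻¹ * conjHom x a)⁻¹ * ((conjHom x a)⁻¹ * conjHom x (conjHom x a)) *
    (((conjHom x a)⁻¹ * conjHom x (conjHom x a))⁻¹ *
      ((conjHom x (conjHom x a))⁻¹ * conjHom x (conjHom x (conjHom x a)))) at h'
  rw [h3] at h'
  have h'' : a * a = (conjHom x a)⁻¹ * a * (conjHom x (conjHom x a))⁻¹ := by
    apply mul_right_cancel (b := a)
    simpa [pow_succ, mul_assoc] using h'
  rw [mul_assoc (conjHom x a), h'']
  simp [mul_assoc]

theorem commute_pow_commSeq {x y : G} (h : Commute (x ^ 3) y) (n : ℕ) :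
    Commute (x ^ 3) (commSeq x y n) := by
  induction n with
  | zero => exact h
  | succ n ih =>
    rw [commSeq_succ, conjHom_apply]
    have hx : Commute (x ^ 3) x := (Commute.refl x).pow_left 3
    exact ih.inv_right.mul_right ((hx.inv_right.mul_right ih).mul_right hx)

theorem commSeq_add (x y : G) (i n : ℕ) :
    commSeq x (commSeq x y i) n = commSeq x y (i + n) := by
  induction n with
  | zero => rfl
  | succ n ih => rw [commSeq_succ, ih, ← commSeq_succ]; rfl

theorem commSeq_norm {x y : G} {n : ℕ} (h : Commute (x ^ 3) (commSeq x y n)) :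
    commSeq x y (n + 1) * conjHom x (commSeq x y (n + 1)) *
      conjHom x (conjHom x (commSeq x y (n + 1))) = 1 := by
  rw [commSeq_succ]
  simp [mul_assoc, conjHom_conjHom_conjHom h]

/-- The relations of `G_Q(2m+5, R_x, R_y)`, where `e` and `k` are the exponents of `s_c` in
`R_x` and `R_y`. -/
structure IsGQ (m e k : ℕ) (x y : G) : Prop where
  cube : ∀ i, 1 ≤ i → i + 3 ≤ 2 * m + 4 →
    commSeq x y i ^ 3 = commSeq x y (i + 2) ^ 2 * commSeq x y (i + 3)
  top : commSeq x y (2 * m + 2) ^ 3 = commSeq x y (2 * m + 4) ^ 2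
  third : fcomm (commSeq x y 1) y ^ 3 = 1
  x_cube : x ^ 3 = commSeq x y (2 * m + 4) ^ e
  y_cube : y ^ 3 = commSeq x y (2 * m + 4) ^ k * commSeq x y 3 * commSeq x y 2 ^ 2

end CommSeq

section CentralCube

variable {G : Type*} [Group G]

theorem pow_mul_of_central {a b u : G} (hua : Commute u a)
    (hab : a * b = u * b * a) (n : ℕ) : a ^ n * b = u ^ n * b * a ^ n := by
  induction n with
  | zero => simp
  | succ n ih =>
    rw [pow_succ, mul_assoc, hab, pow_succ u, ← mul_assoc, ← mul_assoc,
      ← (hua.pow_right n).eq, mul_assoc u, ih, ← mul_assoc, ← mul_assoc, ← pow_succ', pow_succ]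
    simp only [mul_assoc]

/-- If `a = s_i` and `s_{i+1}` satisfy the cube relation and `x³` centralizes `a`, while
`a ^ 3 ^ (l+1)` is centralized by `aˣ`, then powers of exponent `3 ^ (l+1)` are
multiplicative on `a, aˣ`. -/
theorem mul_conjHom_pow {x y : G} {i l : ℕ} (hx : Commute (x ^ 3) (commSeq x y i))
    (h₀ : commSeq x y i ^ 3 = commSeq x y (i + 2) ^ 2 * commSeq x y (i + 3))
    (h₁ : commSeq x y (i + 1) ^ 3 = commSeq x y (i + 3) ^ 2 * commSeq x y (i + 4))
    (hz : Commute (commSeq x y i ^ 3 ^ (l + 1)) (conjHom x (commSeq x y i))) :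
    (commSeq x y i * conjHom x (commSeq x y i)) ^ 3 ^ (l + 1) =
      commSeq x y i ^ 3 ^ (l + 1) * conjHom x (commSeq x y i ^ 3 ^ (l + 1)) := by
  have hx' : Commute (x ^ 3) (commSeq x y (i + 1)) := by
    simpa [commSeq_add] using commute_pow_commSeq hx 1
  have r₁ := cyclic_rel_of_cube hx h₀
  have r₁' := cyclic_rel_of_cube hx' h₁
  have hn := commSeq_norm hx
  have hd := commute_sq_of_cyclic_rel hn r₁'
  rw [commSeq_succ] at hd
  have h3 := conjHom_conjHom_conjHom hx
  set a := commSeq x y i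
  have r₂ := congrArg (conjHom x) r₁
  have r₃ := congrArg (conjHom x) r₂
  simp only [map_mul, h3] at r₂ r₃
  obtain ⟨u, hua, hub, hab, hc⟩ := exists_central_of_cyclic_rel r₁ r₂ r₃
  rw [map_mul, map_inv] at hd
  have h6 := pow_six_of_cyclic_rel hua hub hab hc hd
  have hl : u ^ 3 ^ (l + 1) = 1 := by
    have := pow_mul_of_central hua hab (3 ^ (l + 1))
    rw [hz.eq, mul_assoc] at this
    exact mul_eq_right.mp this.symm
  have hu : u ^ 3 = 1 := by
    have := pow_gcd_eq_one.mpr ⟨h6, hl⟩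
    rwa [show Nat.gcd 6 (3 ^ (l + 1)) = 3 by
      rw [pow_succ, show 6 = 2 * 3 by rfl, Nat.gcd_mul_right, Nat.Coprime.gcd_eq_one, one_mul]
      exact (by decide : Nat.Coprime 2 3).pow_right l] at this
  obtain ⟨hm, hcom⟩ := mul_cube_of_central hua hub hab hu
  rw [pow_succ', pow_mul, hm, (hcom.pow_right 3).mul_pow, map_pow, pow_mul, pow_mul]

/-- In the case `x³ = s_c`, the element `x³` is central. -/
theorem IsGQ.commute_of_eq_one {m k : ℕ} {x y : G} (h : IsGQ m 1 k x y) :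
    Commute (x ^ 3) y := by
  have hxz := h.x_cube
  rw [pow_one] at hxz
  have hzx : Commute (commSeq x y (2 * m + 4)) x := hxz ▸ (Commute.refl x).pow_left 3
  have hφz : conjHom x (commSeq x y (2 * m + 4)) = commSeq x y (2 * m + 4) := by
    rw [conjHom_apply, mul_assoc, hzx.eq, inv_mul_cancel_left]
  have h5 : commSeq x y (2 * m + 5) = 1 := by
    rw [commSeq_succ, hφz, inv_mul_cancel]
  have h6 : commSeq x y (2 * m + 6) = 1 := by
    rw [commSeq_succ, h5]; simp
  have hw : conjHom x (commSeq x y (2 * m + 3)) =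
    commSeq x y (2 * m + 3) * commSeq x y (2 * m + 4) := conjHom_commSeq ..
  have hg : conjHom x (commSeq x y (2 * m + 2)) =
    commSeq x y (2 * m + 2) * commSeq x y (2 * m + 3) := conjHom_commSeq ..
  have hφ3 (g : G) : conjHom x (conjHom x (conjHom x g)) =
      (commSeq x y (2 * m + 4))⁻¹ * g * commSeq x y (2 * m + 4) := by
    rw [← hxz]; simp [conjHom_apply, pow_succ, mul_assoc]
  have htop := h.top
  have hcube := h.cube
  have hycube := h.y_cube
  rw [hxz]
  generalize hzdef : commSeq x y (2 * m + 4) = z at *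
  have hz2g : Commute (z ^ 2) (commSeq x y (2 * m + 2)) :=
    htop ▸ (Commute.refl _).pow_left 3
  have hz2w : Commute (z ^ 2) (commSeq x y (2 * m + 3)) := by
    have hgw : Commute (z ^ 2) (commSeq x y (2 * m + 2) * commSeq x y (2 * m + 3)) := by
      have := congrArg (conjHom x) htop
      rw [map_pow, map_pow, hφz, hg] at this
      exact this ▸ (Commute.refl _).pow_left 3
    simpa using hz2g.inv_right.mul_right hgw
  have hz3 : z ^ 3 = 1 := by
    have h1 := hφ3 (commSeq x y (2 * m + 3))
    simp only [hw, map_mul, hφz] at h1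
    have h2 : z * (commSeq x y (2 * m + 3) * z ^ 2) = commSeq x y (2 * m + 3) := by
      apply mul_right_cancel (b := z)
      calc _ = z * (commSeq x y (2 * m + 3) * z * z * z) := by simp [pow_two, mul_assoc]
        _ = _ := by rw [h1]; simp [mul_assoc]
    rw [← hz2w.eq, ← mul_assoc, ← pow_succ'] at h2
    exact mul_eq_right.mp h2
  have hzz : z = z ^ 2 * z ^ 2 := by rw [← pow_add, pow_succ, hz3, one_mul]
  have hzg : Commute z (commSeq x y (2 * m + 2)) := by
    rw [hzz]; exact hz2g.mul_left hz2g
  have hzw : Commute z (commSeq x y (2 * m + 3)) := by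
    rw [hzz]; exact hz2w.mul_left hz2w
  have hw3 : commSeq x y (2 * m + 3) ^ 3 = 1 := by
    have h1 := hφ3 (commSeq x y (2 * m + 2))
    simp only [hg, map_mul, hφz, hw] at h1
    rw [mul_assoc z⁻¹, ← hzg.eq, inv_mul_cancel_left] at h1
    generalize commSeq x y (2 * m + 3) = w at *
    have h2 : w * (w * z) * (w * z * z) = 1 := by
      rw [mul_assoc, mul_assoc, mul_eq_left] at h1
      simpa [mul_assoc] using h1
    have h3 : w ^ 3 * z ^ 3 = 1 := by
      have zw (t : G) : z * (w * t) = w * (z * t) := hzw.left_comm t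
      rw [← h2]
      simp only [pow_succ, pow_zero, one_mul, mul_assoc, zw]
    rwa [hz3, mul_one] at h3
  have hR (i : ℕ) (h1 : 1 ≤ i) (h2 : i ≤ 2 * m + 3) :
      commSeq x y i ^ 3 = commSeq x y (i + 2) ^ 2 * commSeq x y (i + 3) := by
    rcases (by omega : i + 3 ≤ 2 * m + 4 ∨ i = 2 * m + 2 ∨ i = 2 * m + 3) with hi | rfl | rfl
    · exact hcube i h1 hi
    · rw [htop, hzdef, h5, mul_one]
    · rw [hw3, h5, h6]; simp
  have hcommz {g : G} {n : ℕ} (hg : g ^ n = z ∨ g ^ n = z ^ 2) : Commute z g := by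
    rcases hg with hg | hg
    · exact hg ▸ (Commute.refl g).pow_left n
    · rw [hzz, ← hg]
      exact ((Commute.refl g).pow_left n).mul_left ((Commute.refl g).pow_left n)
  have key (l : ℕ) : ∀ j, j + 2 * l = 2 * m + 2 →
      commSeq x y j ^ 3 ^ (l + 1) = z ∨ commSeq x y j ^ 3 ^ (l + 1) = z ^ 2 := by
    induction l with
    | zero =>
      rintro j rfl
      exact Or.inr htop
    | succ l ih =>
      intro j hj
      have ha := ih (j + 2) (by omega)
      have hza := hcommz ha
      have hφa : conjHom x (commSeq x y (j + 2) ^ 3 ^ (l + 1)) =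
          commSeq x y (j + 2) ^ 3 ^ (l + 1) := by
        rcases ha with ha | ha <;> simp [ha, hφz]
      have hzb : Commute z (conjHom x (commSeq x y (j + 2))) := by
        have := hza.map (conjHom x)
        rwa [hφz] at this
      have hmul := mul_conjHom_pow (l := l) (hxz ▸ hza) (hR (j + 2) (by omega) (by omega))
        (hR (j + 3) (by omega) (by omega)) (by
          rcases ha with ha | ha <;> rw [ha]
          · exact hzb
          · exact hzb.pow_left 2)
      rw [hφa] at hmul
      have hval : commSeq x y (j + 2) ^ 3 ^ (l + 1) * commSeq x y (j + 2) ^ 3 ^ (l + 1) = z ∨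
          commSeq x y (j + 2) ^ 3 ^ (l + 1) * commSeq x y (j + 2) ^ 3 ^ (l + 1) = z ^ 2 := by
        rcases ha with ha | ha <;> rw [ha]
        · exact Or.inr (pow_two z).symm
        · exact Or.inl hzz.symm
      have hpow : commSeq x y j ^ 3 ^ (l + 2) =
          commSeq x y (j + 2) ^ 3 ^ (l + 1) * commSeq x y (j + 2) ^ 3 ^ (l + 1) := by
        rw [pow_succ', pow_mul]
        rcases Nat.eq_zero_or_pos j with rfl | hj0
        · rw [← hmul]
          change (y ^ 3) ^ _ = _
          have hy : y ^ 3 = z ^ k * ((commSeq x y 2 ^ 2)⁻¹ *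
              (commSeq x y 2 * conjHom x (commSeq x y 2)) * commSeq x y 2 ^ 2) := by
            rw [hycube, commSeq_succ x y 2]; simp [pow_two, mul_assoc]
          have hM : Commute z (commSeq x y 2 * conjHom x (commSeq x y 2)) := hza.mul_right hzb
          have hC : Commute z (commSeq x y 2 ^ 2) := hza.pow_right 2
          have hzn : (z ^ k) ^ 3 ^ (l + 1) = 1 := by
            rw [← pow_mul, mul_comm, pow_succ', mul_assoc, pow_mul, hz3, one_pow]
          have hconj (n : ℕ) (p q : G) : (p⁻¹ * q * p) ^ n = p⁻¹ * q ^ n * p := by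
            simpa using conj_pow (i := n) (a := p⁻¹) (b := q)
          have hzM : Commute ((commSeq x y 2 * conjHom x (commSeq x y 2)) ^ 3 ^ (l + 1))
              (commSeq x y 2 ^ 2) := by
            rw [hmul]
            rcases hval with hval | hval <;> rw [hval]
            · exact hC
            · exact hC.pow_left 2
          rw [hy, (((hC.inv_right.mul_right hM).mul_right hC).pow_left k).mul_pow, hzn, one_mul,
            hconj, mul_assoc, hzM.eq, inv_mul_cancel_left]
        · rw [hR j hj0 (by omega), pow_two, mul_assoc, ← conjHom_commSeq, hmul]
      rwa [hpow]
  exact hcommz (key (m + 1) 0 (by omega))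

end CentralCube

section Abelian

variable {G : Type*} [Group G]

theorem IsGQ.commute_x_cube {m e k : ℕ} {x y : G} (he : e ≤ 1) (h : IsGQ m e k x y) :
    Commute (x ^ 3) y := by
  rcases (by omega : e = 0 ∨ e = 1) with rfl | rfl
  · rw [h.x_cube, pow_zero]; exact Commute.one_left y
  · exact h.commute_of_eq_one

/-- One commutation step modulo a subgroup containing the squares of a cyclic triple. -/
theorem inv_mul_mem_of_cyclic {a b c t t' : G} {Z : Subgroup G} (h₀ : a * b * c = 1)
    (ha : a * a ∈ Z) (hc : c * c ∈ Z) (hZ : ∀ s ∈ Z, Commute s c) (ht : t ∈ Z) (ht' : t' ∈ Z) :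
    c⁻¹ * ((a * t)⁻¹ * (b * t')) ∈ Z := by
  have hb : b = a⁻¹ * c⁻¹ := by
    rw [eq_inv_mul_iff_mul_eq, ← mul_eq_one_iff_eq_inv, h₀]
  have : c⁻¹ * ((a * t)⁻¹ * (b * t')) = t⁻¹ * (a * a)⁻¹ * (c * c)⁻¹ * t' := by
    have h1 := (hZ _ (mul_mem ha ht)).inv_inv.eq
    subst hb
    calc c⁻¹ * ((a * t)⁻¹ * (a⁻¹ * c⁻¹ * t')) = c⁻¹ * (a * a * t)⁻¹ * (c⁻¹ * t') := by
          simp [mul_assoc]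
      _ = _ := by rw [← h1]; simp [mul_assoc]
  rw [this]
  exact mul_mem (mul_mem (mul_mem (inv_mem ht) (inv_mem ha)) (inv_mem hc)) ht'

theorem mul_self_mem_of_inv_mul_mem {a g : G} {Z : Subgroup G} (ha : a * a ∈ Z)
    (hZ : ∀ s ∈ Z, Commute s a) (hg : a⁻¹ * g ∈ Z) : g * g ∈ Z := by
  have : g * g = a * a * (a⁻¹ * g) * (a⁻¹ * g) := by
    rw [mul_assoc a a, ← (hZ _ hg).eq]; simp [mul_assoc]
  rw [this]
  exact mul_mem (mul_mem ha hg) hg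

/-- The element `s₂` commutes with its conjugate under `x`. -/
theorem IsGQ.commute_conjHom {m e k : ℕ} {x y : G} (he : e ≤ 1) (h : IsGQ m e k x y) :
    Commute (commSeq x y 1) (conjHom x (commSeq x y 1)) := by
  have hx := h.commute_x_cube he
  have habc := commSeq_norm (n := 0) hx
  have hab := commute_sq_of_cyclic_rel habc
    (cyclic_rel_of_cube (commute_pow_commSeq hx 1) (h.cube 1 le_rfl (by omega)))
  have h3 := conjHom_conjHom_conjHom (commute_pow_commSeq hx 1)
  rw [zero_add] at habc
  generalize ha : commSeq x y 1 = a at *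
  generalize hb : conjHom x a = b at *
  generalize hc : conjHom x b = c at *
  have hbc : Commute (b * b) c := by simpa [hb, hc] using hab.map (conjHom x)
  have hca : Commute (c * c) a := by simpa [hb, hc, h3] using hbc.map (conjHom x)
  have hbca : b * c * a = 1 := by simpa [hb, hc, h3] using congrArg (conjHom x) habc
  have hcab : c * a * b = 1 := by simpa [hb, hc, h3] using congrArg (conjHom x) hbca
  have third {p q r : G} (h₀ : p * q * r = 1) {s : G} (hp : Commute s p) (hq : Commute s q) :
      Commute s r := by
    rw [eq_inv_of_mul_eq_one_right h₀]
    exact (hp.mul_right hq).inv_right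
  have hself (g : G) : Commute (g * g) g := (Commute.refl g).mul_left (Commute.refl g)
  set Z := Subgroup.centralizer ({a, b, c} : Set G)
  have mem_Z {g : G} : g ∈ Z ↔ Commute g a ∧ Commute g b ∧ Commute g c := by
    simp [Z, Subgroup.mem_centralizer_iff, commute_iff_eq, eq_comm (a := g * _)]
  have ha2 : a * a ∈ Z := mem_Z.mpr ⟨hself a, hab, third habc (hself a) hab⟩
  have hb2 : b * b ∈ Z := mem_Z.mpr ⟨third hbca (hself b) hbc, hself b, hbc⟩
  have hc2 : c * c ∈ Z := mem_Z.mpr ⟨hca, third hcab (hself c) hca, hself c⟩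
  have map_Z {g : G} (hg : g ∈ Z) : conjHom x g ∈ Z := by
    obtain ⟨h1, h2, h3'⟩ := mem_Z.mp hg
    have h1 := h1.map (conjHom x)
    have h2 := h2.map (conjHom x)
    have h3' := h3'.map (conjHom x)
    rw [hb] at h1
    rw [hc] at h2
    rw [h3] at h3'
    exact mem_Z.mpr ⟨h3', h1, h2⟩
  have step {p q r g : G} (hq : conjHom x p = q) (h₀ : p * q * r = 1) (hp2 : p * p ∈ Z)
      (hr2 : r * r ∈ Z) (hr : ∀ s ∈ Z, Commute s r) (hg : p⁻¹ * g ∈ Z) :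
      r⁻¹ * (g⁻¹ * conjHom x g) ∈ Z := by
    have := inv_mul_mem_of_cyclic h₀ hp2 hr2 hr hg (map_Z hg)
    rwa [map_mul, map_inv, hq, mul_inv_cancel_left, mul_inv_cancel_left] at this
  have coset (n : ℕ) : a⁻¹ * commSeq x y (n + 1) ∈ Z ∨ b⁻¹ * commSeq x y (n + 1) ∈ Z ∨
      c⁻¹ * commSeq x y (n + 1) ∈ Z := by
    induction n with
    | zero => left; rw [zero_add, ha, inv_mul_cancel]; exact one_mem Z
    | succ n ih =>
      rw [commSeq_succ x y (n + 1)]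
      rcases ih with ih | ih | ih
      · exact .inr (.inr (step hb habc ha2 hc2 (fun s hs => (mem_Z.mp hs).2.2) ih))
      · exact .inl (step hc hbca hb2 ha2 (fun s hs => (mem_Z.mp hs).1) ih)
      · exact .inr (.inl (step h3 hcab hc2 hb2 (fun s hs => (mem_Z.mp hs).2.1) ih))
  have sq (n : ℕ) : commSeq x y (n + 1) * commSeq x y (n + 1) ∈ Z := by
    rcases coset n with hn | hn | hn
    · exact mul_self_mem_of_inv_mul_mem ha2 (fun s hs => (mem_Z.mp hs).1) hn
    · exact mul_self_mem_of_inv_mul_mem hb2 (fun s hs => (mem_Z.mp hs).2.1) hn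
    · exact mul_self_mem_of_inv_mul_mem hc2 (fun s hs => (mem_Z.mp hs).2.2) hn
  have hmem : commSeq x y (2 * m + 1 + 1) ∈ Z := by
    have htop : commSeq x y (2 * m + 1 + 1) ^ 3 ∈ Z := by
      rw [h.top, pow_two]; exact sq (2 * m + 3)
    rw [pow_succ, pow_two] at htop
    exact (Subgroup.mul_mem_cancel_left Z (sq (2 * m + 1))).mp htop
  rcases coset (2 * m + 1) with hn | hn | hn <;>
    have hn := inv_mem_iff.mp ((Subgroup.mul_mem_cancel_right Z hmem).mp hn)
  · exact (mem_Z.mp hn).2.1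
  · exact (mem_Z.mp hn).1.symm
  · exact third hcab (mem_Z.mp hn).1.symm (Commute.refl a)

theorem commute_commSeq_of_commute_conjHom {x y : G} (hx : Commute (x ^ 3) y)
    (h : Commute (commSeq x y 1) (conjHom x (commSeq x y 1))) (i j : ℕ) :
    Commute (commSeq x y (i + 1)) (commSeq x y (j + 1)) := by
  have habc := commSeq_norm (n := 0) hx
  rw [zero_add] at habc
  set a := commSeq x y 1
  set A := Subgroup.closure ({a, conjHom x a} : Set G)
  have ha : a ∈ A := Subgroup.subset_closure (by simp)
  have hb : conjHom x a ∈ A := Subgroup.subset_closure (by simp)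
  have hc : conjHom x (conjHom x a) ∈ A := by
    rw [eq_inv_of_mul_eq_one_right habc]
    exact inv_mem (mul_mem ha hb)
  have map_A : A ≤ A.comap (conjHom x) := by
    rw [Subgroup.closure_le]
    rintro g (rfl | rfl)
    · exact hb
    · exact hc
  have mem_A (n : ℕ) : commSeq x y (n + 1) ∈ A := by
    induction n with
    | zero => exact ha
    | succ n ih => rw [commSeq_succ x y (n + 1)]; exact mul_mem (inv_mem ih) (map_A ih)
  have hA : IsMulCommutative A := by
    apply Subgroup.isMulCommutative_closure
    rintro g (rfl | rfl) g' (rfl | rfl)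
    exacts [rfl, h, h.symm, rfl]
  exact setLike_mul_comm (mem_A i) (mem_A j)

theorem IsGQ.commute {m e k : ℕ} {x y : G} (he : e ≤ 1) (h : IsGQ m e k x y) (i j : ℕ) :
    Commute (commSeq x y (i + 1)) (commSeq x y (j + 1)) :=
  commute_commSeq_of_commute_conjHom (h.commute_x_cube he) (h.commute_conjHom he) i j

theorem IsGQ.norm {m e k : ℕ} {x y : G} (he : e ≤ 1) (h : IsGQ m e k x y) (n : ℕ) :
    commSeq x y (n + 1) ^ 3 * commSeq x y (n + 2) ^ 3 * commSeq x y (n + 3) = 1 := by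
  have hn := commSeq_norm (commute_pow_commSeq (h.commute_x_cube he) n)
  have ba (t : G) := (h.commute he (n + 1) n).left_comm t
  rw [← hn]
  simp only [conjHom_commSeq, map_mul, pow_succ, pow_zero, one_mul, mul_assoc, ba]

theorem IsGQ.cube_add_one {m e k : ℕ} {x y : G} (he : e ≤ 1) (h : IsGQ m e k x y) (n : ℕ) :
    commSeq x y (n + 1) ^ 3 = commSeq x y (n + 3) ^ 2 * commSeq x y (n + 4) := by
  have h1 := h.norm he n
  have h2 := h.norm he (n + 1)
  rw [mul_assoc, mul_eq_one_iff_eq_inv] at h1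
  rw [mul_assoc, mul_eq_one_iff_eq_inv] at h2
  rw [h1, h2, mul_inv_rev, inv_inv, pow_succ', mul_assoc, inv_mul_cancel_left]

theorem IsGQ.commSeq_eq_one {m e k : ℕ} {x y : G} (he : e ≤ 1) (h : IsGQ m e k x y) :
    commSeq x y (2 * m + 5) = 1 := by
  have h1 := h.cube_add_one he (2 * m + 1)
  rw [h.top] at h1
  exact mul_eq_left.mp h1.symm

theorem IsGQ.conjHom_last {m e k : ℕ} {x y : G} (he : e ≤ 1) (h : IsGQ m e k x y) :
    conjHom x (commSeq x y (2 * m + 4)) = commSeq x y (2 * m + 4) := by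
  rw [conjHom_commSeq, h.commSeq_eq_one he, mul_one]

end Abelian

section CentralThird

variable {G : Type*} [Group G]

theorem commute_conjHom_of_commute {x y g : G} (h : Commute y g)
    (ha : Commute (commSeq x y 1) (conjHom x g)) : Commute y (conjHom x g) := by
  have h1 : Commute (y * commSeq x y 1) (conjHom x g) := by
    have := h.map (conjHom x)
    rwa [show conjHom x y = y * commSeq x y 1 from conjHom_commSeq x y 0] at this
  simpa using h1.mul_left ha.inv_left

theorem IsGQ.conjHom_y_cube {m e k : ℕ} {x y : G} (he : e ≤ 1) (h : IsGQ m e k x y) :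
    conjHom x (y ^ 3) = commSeq x y (2 * m + 4) ^ k * (commSeq x y 2)⁻¹ := by
  have hn := h.norm he 1
  have h32t (t : G) := (h.commute he 2 1).left_comm t
  have h42t (t : G) := (h.commute he 3 1).left_comm t
  have h43t (t : G) := (h.commute he 3 2).left_comm t
  have h32 := (h.commute he 2 1).eq
  have h43 := (h.commute he 3 2).eq
  rw [h.y_cube, map_mul, map_mul, map_pow, map_pow, h.conjHom_last he, mul_assoc]
  congr 1
  rw [eq_inv_iff_mul_eq_one, ← hn, mul_assoc]
  simp only [conjHom_commSeq, pow_succ, pow_zero, one_mul, mul_assoc]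
  simp only [Nat.reduceAdd] at *
  simp only [h32t, h42t, h43t, h32, h43]

/-- The elements `s₃, s₄, …` commute with `y`. -/
theorem IsGQ.commute_y {m e k : ℕ} {x y : G} (he : e ≤ 1) (h : IsGQ m e k x y) (n : ℕ) :
    Commute y (commSeq x y (n + 2)) := by
  have hv := h.conjHom_y_cube he
  have hc := h.commute he
  have hz (i : ℕ) : Commute (commSeq x y (i + 1)) (commSeq x y (2 * m + 4) ^ k) :=
    (hc i (2 * m + 3)).pow_right k
  have h1 : Commute y (commSeq x y (2 * m + 4) ^ k * (commSeq x y 2)⁻¹) := by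
    rw [← hv]
    refine commute_conjHom_of_commute ((Commute.refl y).pow_right 3) ?_
    rw [hv]
    exact (hz 0).mul_right (hc 0 1).inv_right
  have hv' : conjHom x (commSeq x y (2 * m + 4) ^ k * (commSeq x y 2)⁻¹) =
      commSeq x y (2 * m + 4) ^ k * (commSeq x y 2)⁻¹ * (commSeq x y 3)⁻¹ := by
    rw [map_mul, map_pow, h.conjHom_last he, map_inv, conjHom_commSeq, (hc 1 2).eq, mul_inv_rev,
      mul_assoc]
  have step {n : ℕ} (hn : Commute y (commSeq x y (n + 1))) : Commute y (commSeq x y (n + 2)) := by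
    have : Commute y (conjHom x (commSeq x y (n + 1))) := by
      refine commute_conjHom_of_commute hn ?_
      rw [conjHom_commSeq]
      exact (hc 0 n).mul_right (hc 0 (n + 1))
    rw [conjHom_commSeq] at this
    simpa using hn.inv_right.mul_right this
  have h3 : Commute y (commSeq x y 3) := by
    have : Commute y (conjHom x (commSeq x y (2 * m + 4) ^ k * (commSeq x y 2)⁻¹)) := by
      refine commute_conjHom_of_commute h1 ?_
      rw [hv']
      exact ((hz 0).mul_right (hc 0 1).inv_right).mul_right (hc 0 2).inv_right
    rw [hv'] at this
    simpa [mul_assoc] using h1.inv_right.mul_right this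
  have hge (n : ℕ) : Commute y (commSeq x y (n + 3)) := by
    induction n with
    | zero => exact h3
    | succ n ih => exact step ih
  cases n with
  | zero => simpa using ((hge (2 * m + 1)).pow_right k).inv_right.mul_right h1
  | succ n => exact hge n

theorem commute_of_mul_mul_eq {a t : G} (ht : t * t * t = 1) (h₁ : t * a * t * a * t = a * a)
    (h₂ : a * t * a = t * a * t * t * a * t) :
    Commute (a⁻¹ * t * a * t⁻¹) a ∧ Commute (a⁻¹ * t * a * t⁻¹) t := by
  have htt : t * t = t⁻¹ := mul_eq_one_iff_eq_inv.mp ht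
  have hL : Commute (t⁻¹ * a * t) a := by
    apply mul_left_cancel (a := t)
    rw [mul_assoc (t * a), htt] at h₂
    simpa [mul_assoc] using h₂
  have hR : Commute (t * a * t⁻¹) a := by
    simpa [mul_assoc] using (hL.map (MulAut.conj t)).symm
  have hn : a⁻¹ * t * a * t⁻¹ = a⁻¹ * (t * a * t⁻¹) := by simp [mul_assoc]
  have hn' : a⁻¹ * t * a * t⁻¹ = a * (t⁻¹ * a * t)⁻¹ := by
    have htt' : t⁻¹ * t⁻¹ = t := by rw [← mul_inv_rev, htt, inv_inv]
    rw [hn, inv_mul_eq_iff_eq_mul, ← mul_assoc, eq_mul_inv_iff_mul_eq, ← h₁]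
    calc t * a * t⁻¹ * (t⁻¹ * a * t) = t * a * (t⁻¹ * t⁻¹) * a * t := by simp only [mul_assoc]
      _ = _ := by rw [htt']
  constructor
  · rw [hn]; exact (Commute.refl a).inv_left.mul_left hR
  · refine Eq.symm (mul_inv_eq_iff_eq_mul.mp ?_)
    nth_rw 1 [hn']
    rw [hn, ← hR.inv_right.eq]
    simp [mul_assoc]

/-- The element `t₃` is centralized by `x` and `y`. -/
theorem IsGQ.commute_third {m e k : ℕ} {x y : G} (he : e ≤ 1) (h : IsGQ m e k x y) :
    Commute (fcomm (commSeq x y 1) y) x ∧ Commute (fcomm (commSeq x y 1) y) y := by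
  have hφa : conjHom x (commSeq x y 1) = commSeq x y 1 * commSeq x y 2 := conjHom_commSeq x y 1
  have hφy : conjHom x y = y * commSeq x y 1 := conjHom_commSeq x y 0
  have hyx : y * x = x * y * commSeq x y 1 := by simp [commSeq, fcomm, mul_assoc]
  have hdy := h.commute_y he 0
  have hda := h.commute he 1 0
  have ht3 := h.third
  have hy3 : Commute (y ^ 3) (commSeq x y 1) := by
    rw [h.y_cube]
    exact (((h.commute he (2 * m + 3) 0).pow_left k).mul_left (h.commute he 2 0)).mul_left
      ((h.commute he 1 0).pow_left 2)
  have hcube : (y * commSeq x y 1) ^ 3 = y ^ 3 * commSeq x y 1 ^ 3 := by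
    have hn := h.norm he 0
    rw [← hφy, ← map_pow, h.conjHom_y_cube he, h.y_cube,
      mul_assoc (_ ^ k), mul_assoc (_ ^ k)]
    congr 1
    rw [mul_assoc, mul_eq_one_iff_eq_inv] at hn
    rw [hn, (h.commute he 2 1).pow_right 2 |>.eq, mul_inv_rev]
    simp [pow_succ, mul_assoc]
  generalize commSeq x y 2 = d at *
  generalize commSeq x y 1 = a at *
  have hψ3 := conjHom_conjHom_conjHom hy3
  have hp : conjHom y a = a * fcomm a y := by simp [fcomm, conjHom_apply, mul_assoc]
  have hdt : Commute d (fcomm a y) :=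
    ((hda.inv_right.mul_right hdy.symm.inv_right).mul_right hda).mul_right hdy.symm
  generalize fcomm a y = t at *
  have q₁ : conjHom y (conjHom y a) * conjHom y a = a * a := by
    apply mul_left_cancel (a := y ^ 3)
    apply mul_right_cancel (b := a)
    simpa [conjHom_apply, pow_succ, mul_assoc] using hcube
  have q₂ : a * conjHom y (conjHom y a) = conjHom y a * conjHom y a := by
    simpa [hψ3] using congrArg (conjHom y) q₁
  have q₃ : conjHom y a * a = conjHom y (conjHom y a) * conjHom y (conjHom y a) := by
    simpa [hψ3] using congrArg (conjHom y) q₂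
  have hq : conjHom y (conjHom y a) = t * a * t := by
    apply mul_left_cancel (a := a)
    rw [q₂, hp]; simp only [mul_assoc]
  rw [hq, hp] at q₁ q₃
  have htt : t * t * t = 1 := by rw [← ht3, pow_succ, pow_two]
  obtain ⟨hna, hnt⟩ := commute_of_mul_mul_eq htt (by simpa [mul_assoc] using q₁)
    (by simpa [mul_assoc] using q₃)
  have hdn : Commute d (a⁻¹ * t * a * t⁻¹) :=
    ((hda.inv_right.mul_right hdt).mul_right hda).mul_right hdt.inv_right
  obtain ⟨n, hn⟩ : ∃ n, n = a⁻¹ * t * a * t⁻¹ := ⟨_, rfl⟩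
  rw [← hn] at hna hnt hdn
  have hat : a⁻¹ * t * a = n * t := by rw [hn]; simp
  have hψt : conjHom y t = n * t := by
    have hm : a * t * conjHom y t = t * a * t := by rw [← hq, hp, map_mul, hp]
    calc conjHom y t = t⁻¹ * a⁻¹ * (a * t * conjHom y t) := by simp [mul_assoc]
      _ = t⁻¹ * (a⁻¹ * t * a) * t := by rw [hm]; simp only [mul_assoc]
      _ = n * t := by rw [hat, hnt.eq, inv_mul_cancel_left, hnt.eq]
  have hφt : conjHom x t = n * t := by
    have hm := congrArg (conjHom x) hp
    rw [conjHom_apply y, map_mul, map_mul, map_inv, hφy, hφa, map_mul, hφa] at hm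
    calc conjHom x t = d⁻¹ * a⁻¹ * (a * d * conjHom x t) := by simp [mul_assoc]
      _ = d⁻¹ * a⁻¹ * a⁻¹ * y⁻¹ * a * (d * (y * a)) := by rw [← hm]; simp [mul_assoc]
      _ = d⁻¹ * a⁻¹ * a⁻¹ * (y⁻¹ * a * y) * a * d := by
        rw [(hdy.symm.mul_right hda).eq]; simp only [mul_assoc]
      _ = d⁻¹ * (a⁻¹ * t * a * d) := by rw [← conjHom_apply, hp]; simp [mul_assoc]
      _ = n * t := by rw [hat, ← (hdn.mul_right hdt).eq, inv_mul_cancel_left]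
  have hψn : conjHom y n = n := by
    rw [hn]
    simp only [map_mul, map_inv, hψt, hp]
    calc (a * t)⁻¹ * (n * t) * (a * t) * (n * t)⁻¹ =
          t⁻¹ * (a⁻¹ * n * t * a) * n⁻¹ := by simp [mul_assoc]
      _ = t⁻¹ * (n * (a⁻¹ * t * a)) * n⁻¹ := by
        rw [← hna.inv_right.eq]; simp only [mul_assoc]
      _ = t⁻¹ * (n * n * t) * n⁻¹ := by rw [hat, mul_assoc n]
      _ = n := by rw [(hnt.mul_left hnt).eq]; simp [mul_assoc]
      _ = _ := hn
  have hφn : conjHom x n = n := by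
    rw [hn]
    simp only [map_mul, map_inv, hφt, hφa]
    calc (a * d)⁻¹ * (n * t) * (a * d) * (n * t)⁻¹ =
          d⁻¹ * (a⁻¹ * n * t * a * d) * t⁻¹ * n⁻¹ := by simp [mul_assoc]
      _ = d⁻¹ * (n * (a⁻¹ * t * a) * d) * t⁻¹ * n⁻¹ := by
        rw [← hna.inv_right.eq]; simp only [mul_assoc]
      _ = n := by
        rw [hat, ← (hdn.mul_right (hdn.mul_right hdt)).eq]; simp [mul_assoc]
      _ = _ := hn
  have hnnt : Commute a (n * (n * t)) := by
    have h1 : (y * x)⁻¹ * t * (y * x) = n * (n * t) := by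
      calc (y * x)⁻¹ * t * (y * x) = conjHom x (conjHom y t) := by
            simp [conjHom_apply, mul_assoc]
        _ = _ := by rw [hψt, map_mul, hφn, hφt]
    have h2 : (x * y)⁻¹ * t * (x * y) = n * (n * t) := by
      calc (x * y)⁻¹ * t * (x * y) = conjHom y (conjHom x t) := by
            simp [conjHom_apply, mul_assoc]
        _ = _ := by rw [hφt, map_mul, hψn, hψt]
    refine Eq.symm (inv_mul_eq_iff_eq_mul.mp ?_)
    rw [← mul_assoc]
    nth_rw 1 [← h2]
    rw [← h1, hyx]
    simp [mul_assoc]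
  have hat' : Commute a t := by
    simpa using hna.symm.inv_right.mul_right (hna.symm.inv_right.mul_right hnnt)
  have hn1 : n = 1 := by rw [hn, mul_assoc a⁻¹, ← hat'.eq]; simp
  rw [hn1, one_mul, conjHom_apply, mul_assoc, inv_mul_eq_iff_eq_mul] at hφt hψt
  exact ⟨hφt, hψt⟩

end CentralThird

section Inversion

variable {G : Type*} [Group G]

theorem conjHom_mul_apply (a b g : G) : conjHom (a * b) g = conjHom b (conjHom a g) := by
  simp [conjHom_apply, mul_assoc]

theorem conjHom_inv_conjHom (x g : G) : conjHom x⁻¹ (conjHom x g) = g := by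
  simp [conjHom_apply, mul_assoc]

theorem conjHom_eq_self {x g : G} (h : Commute g x) : conjHom x g = g := by
  rw [conjHom_apply, mul_assoc, h.eq, inv_mul_cancel_left]

theorem conjHom_inv_conjHom_inv {x g : G} (h : Commute (x ^ 3) g) :
    conjHom x⁻¹ (conjHom x⁻¹ g) = conjHom x g := by
  nth_rw 1 [← conjHom_conjHom_conjHom h]
  rw [conjHom_inv_conjHom, conjHom_inv_conjHom]

theorem Commute.commSeq_right {x y g : G} (hx : Commute g x) (hy : Commute g y) (n : ℕ) :
    Commute g (commSeq x y n) := by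
  induction n with
  | zero => exact hy
  | succ n ih =>
    exact ((ih.inv_right.mul_right hx.inv_right).mul_right ih).mul_right hx

variable {m e k : ℕ} {x y : G}

theorem IsGQ.commSeq_inv_one (he : e ≤ 1) (h : IsGQ m e k x y) :
    commSeq x⁻¹ y⁻¹ 1 = conjHom x⁻¹ (commSeq x y 1) * (fcomm (commSeq x y 1) y)⁻¹ := by
  obtain ⟨htx, hty⟩ := h.commute_third he
  have hyx : y * x = x * y * commSeq x y 1 := by simp [commSeq, fcomm, mul_assoc]
  have h1 : commSeq x⁻¹ y⁻¹ 1 = y * x * y⁻¹ * x⁻¹ := by simp [commSeq, fcomm]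
  have hyay : y * commSeq x y 1 * y⁻¹ = commSeq x y 1 * (fcomm (commSeq x y 1) y)⁻¹ := by
    rw [eq_mul_inv_iff_mul_eq, mul_assoc, ← hty.inv_right.eq]
    simp [fcomm, mul_assoc]
  rw [h1, hyx, mul_assoc x, mul_assoc x, hyay, conjHom_apply, inv_inv, mul_assoc, mul_assoc,
    htx.inv_inv.eq]
  simp only [mul_assoc]

theorem IsGQ.commSeq_inv (he : e ≤ 1) (h : IsGQ m e k x y) (n : ℕ) :
    commSeq x⁻¹ y⁻¹ (n + 2) =
      conjHom (x⁻¹ ^ (n + 2)) (commSeq x y (n + 2) ^ ((-1 : ℤ) ^ (n + 1))) := by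
  induction n with
  | zero =>
    obtain ⟨htx, hty⟩ := h.commute_third he
    have hφ : conjHom x⁻¹ (commSeq x y 1) * conjHom x⁻¹ (commSeq x y 2) = commSeq x y 1 := by
      rw [← map_mul, ← conjHom_commSeq, conjHom_inv_conjHom]
    have hφ' : conjHom x⁻¹ (conjHom x⁻¹ (commSeq x y 1)) =
        conjHom x⁻¹ (commSeq x y 1) * (conjHom x⁻¹ (conjHom x⁻¹ (commSeq x y 2)))⁻¹ := by
      rw [eq_mul_inv_iff_mul_eq, ← map_mul, hφ]
    have hd : Commute (fcomm (commSeq x y 1) y)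
        (conjHom x⁻¹ (conjHom x⁻¹ (commSeq x y 2)))⁻¹ := by
      have := htx.commSeq_right hty 2
      simp only [conjHom_apply, inv_inv]
      exact ((htx.mul_right ((htx.mul_right this).mul_right htx.inv_right)).mul_right
        htx.inv_right).inv_right
    rw [commSeq_succ, h.commSeq_inv_one he, map_mul, map_inv, conjHom_eq_self htx.inv_right, hφ',
      zero_add, zero_add, pow_one, zpow_neg_one, pow_two, conjHom_mul_apply, map_inv, map_inv,
      mul_inv_rev, inv_inv, mul_assoc, mul_assoc (conjHom x⁻¹ (commSeq x y 1)),
      inv_mul_cancel_left, ← mul_assoc, hd.eq, mul_inv_cancel_right]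
  | succ n ih =>
    have hc := h.commute he (n + 1) (n + 2)
    have hconj (w : G) : conjHom x⁻¹ (conjHom (x⁻¹ ^ (n + 2)) w) =
        conjHom (x⁻¹ ^ (n + 2)) (conjHom x⁻¹ w) := by
      rw [← conjHom_mul_apply, ← conjHom_mul_apply, ← pow_succ, ← pow_succ']
    have hφ (w : G) : w⁻¹ * conjHom x⁻¹ w = conjHom x⁻¹ ((conjHom x w)⁻¹ * w) := by
      rw [map_mul, map_inv, conjHom_inv_conjHom]
    rw [commSeq_succ, ih, hconj, ← map_inv, ← map_mul, hφ, map_zpow, conjHom_commSeq,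
      hc.mul_zpow, mul_inv_rev, inv_mul_cancel_right, pow_succ' (x⁻¹) (n + 2), conjHom_mul_apply,
      pow_succ (-1 : ℤ) (n + 1), mul_neg_one, zpow_neg]

theorem IsGQ.commSeq_inv_pow_three (he : e ≤ 1) (h : IsGQ m e k x y) (n : ℕ) :
    commSeq x⁻¹ y⁻¹ (n + 1) ^ 3 =
      conjHom (x⁻¹ ^ (n + 1)) ((commSeq x y (n + 1) ^ 3) ^ ((-1 : ℤ) ^ n)) := by
  cases n with
  | zero =>
    obtain ⟨htx, hty⟩ := h.commute_third he
    have hc : Commute (conjHom x⁻¹ (commSeq x y 1)) (fcomm (commSeq x y 1) y)⁻¹ := by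
      rw [conjHom_apply, inv_inv]
      exact ((htx.mul_right (htx.commSeq_right hty 1)).mul_right htx.inv_right).inv_left.symm
    rw [zero_add, h.commSeq_inv_one he, hc.mul_pow, inv_pow, h.third]
    simp
  | succ n =>
    rw [h.commSeq_inv he, ← map_pow]
    congr 1
    rw [← zpow_natCast, ← zpow_mul, mul_comm, zpow_mul, zpow_natCast]

/-- The relations are inherited by `x⁻¹, y⁻¹`. -/
theorem IsGQ.inv (he : e ≤ 1) (h : IsGQ m e k x y) : IsGQ m e k x⁻¹ y⁻¹ := by
  have hx := h.commute_x_cube he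
  have hc := h.commute he
  obtain ⟨htx, hty⟩ := h.commute_third he
  have hxz : Commute (commSeq x y (2 * m + 4)) x := by
    have := h.conjHom_last he
    rwa [conjHom_apply, mul_assoc, inv_mul_eq_iff_eq_mul] at this
  have hpow_z (n : ℕ) : Commute (commSeq x y (2 * m + 4)) (x⁻¹ ^ n) :=
    hxz.inv_right.pow_right n
  have hφ2 (n : ℕ) : conjHom x⁻¹ (conjHom x⁻¹ (commSeq x y n)) =
      commSeq x y n * commSeq x y (n + 1) := by
    rw [conjHom_inv_conjHom_inv (commute_pow_commSeq hx n), conjHom_commSeq]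
  have hφ3 (n : ℕ) : conjHom x⁻¹ (conjHom x⁻¹ (conjHom x⁻¹ (commSeq x y n))) =
      commSeq x y n := by
    refine conjHom_conjHom_conjHom ?_
    rw [inv_pow]
    exact (commute_pow_commSeq hx n).inv_left
  have conj_two (i n : ℕ) (w : ℤ) : conjHom (x⁻¹ ^ (i + 2)) (commSeq x y n ^ w) =
      conjHom (x⁻¹ ^ i) ((commSeq x y n * commSeq x y (n + 1)) ^ w) := by
    rw [add_comm, pow_add, conjHom_mul_apply, pow_two, conjHom_mul_apply, map_zpow, map_zpow, hφ2]
  have conj_three (i n : ℕ) (w : ℤ) : conjHom (x⁻¹ ^ (i + 3)) (commSeq x y n ^ w) =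
      conjHom (x⁻¹ ^ i) (commSeq x y n ^ w) := by
    rw [add_comm, pow_add, conjHom_mul_apply, pow_succ, pow_two, conjHom_mul_apply,
      conjHom_mul_apply, map_zpow, map_zpow, map_zpow, hφ3]
  have hz : commSeq x⁻¹ y⁻¹ (2 * m + 4) = (commSeq x y (2 * m + 4))⁻¹ := by
    rw [h.commSeq_inv he, (show Odd (2 * m + 2 + 1) from ⟨m + 1, by ring⟩).neg_one_pow,
      zpow_neg_one, map_inv, conjHom_eq_self (hpow_z _)]
  have h2 : commSeq x⁻¹ y⁻¹ 2 = (commSeq x y 2 * commSeq x y 3)⁻¹ := by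
    rw [h.commSeq_inv he 0, conj_two]; simp [conjHom_apply]
  have h3 : commSeq x⁻¹ y⁻¹ 3 = commSeq x y 3 := by
    rw [h.commSeq_inv he 1, show 1 + 2 = 0 + 3 by rfl, conj_three]; simp [conjHom_apply]
  constructor
  · intro i hi _
    obtain ⟨n, rfl⟩ := Nat.exists_eq_add_of_le' hi
    rw [h.commSeq_inv_pow_three he, h.commSeq_inv he (n + 1),
      show n + 1 + 3 = n + 2 + 2 by rfl, h.commSeq_inv he (n + 2), conj_two,
      show n + 2 + 2 = n + 1 + 3 by rfl, conj_three, ← map_pow, ← map_mul, h.cube_add_one he]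
    congr 1
    have h34 := hc (n + 2) (n + 3)
    rw [h34.mul_zpow, (h34.pow_left 2).mul_zpow, (h34.zpow_zpow _ _).mul_pow]
    rcases neg_one_pow_eq_or ℤ n with hn | hn <;> simp [hn, pow_succ, mul_assoc]
  · rw [hz, h.commSeq_inv_pow_three he (2 * m + 1), h.top,
      (show Odd (2 * m + 1) from ⟨m, rfl⟩).neg_one_pow, zpow_neg_one, map_inv, map_pow,
      conjHom_eq_self (hpow_z _), inv_pow]
  · have ht3 := h.third
    have hr2 := h.commute_y he 0
    have hr3 := h.commute_y he 1
    have htr := htx.commSeq_right hty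
    have h1 := h.commSeq_inv_one he
    have hφa : conjHom x⁻¹ (commSeq x y 1) =
        commSeq x y 1 * (commSeq x y 2 * (commSeq x y 2 * commSeq x y 3)) := by
      nth_rw 1 [← conjHom_conjHom_conjHom (commute_pow_commSeq hx 1)]
      rw [conjHom_inv_conjHom, conjHom_commSeq, map_mul, conjHom_commSeq, conjHom_commSeq,
        mul_assoc]
    rw [hφa, mul_assoc] at h1
    generalize hw : commSeq x y 2 * (commSeq x y 2 * commSeq x y 3) *
      (fcomm (commSeq x y 1) y)⁻¹ = w at h1
    have hyw : Commute y w :=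
      hw ▸ (hr2.mul_right (hr2.mul_right hr3)).mul_right hty.symm.inv_right
    have htw : Commute (fcomm (commSeq x y 1) y) w :=
      hw ▸ ((htr 2).mul_right ((htr 2).mul_right (htr 3))).mul_right (Commute.refl _).inv_right
    have : fcomm (commSeq x⁻¹ y⁻¹ 1) y⁻¹ = (fcomm (commSeq x y 1) y)⁻¹ := by
      have hty' : (fcomm (commSeq x y 1) y)⁻¹ = (commSeq x y 1)⁻¹ * y * commSeq x y 1 * y⁻¹ := by
        rw [eq_mul_inv_iff_mul_eq, hty.inv_left.eq]
        simp [fcomm, mul_assoc]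
      calc fcomm (commSeq x⁻¹ y⁻¹ 1) y⁻¹ =
            w⁻¹ * ((commSeq x y 1)⁻¹ * y * commSeq x y 1 * (w * y⁻¹)) := by
            rw [h1]; simp [fcomm, mul_assoc]
        _ = w⁻¹ * ((fcomm (commSeq x y 1) y)⁻¹ * w) := by
          rw [← hyw.inv_left.eq, hty']; simp only [mul_assoc]
        _ = _ := by rw [htw.inv_left.eq, inv_mul_cancel_left]
    rw [this, inv_pow, ht3, inv_one]
  · rw [hz, inv_pow, h.x_cube, inv_pow]
  · have hzc : Commute (commSeq x y (2 * m + 4) ^ k) (commSeq x y 3 * commSeq x y 2 ^ 2) :=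
      ((hc (2 * m + 3) 2).mul_right ((hc (2 * m + 3) 1).pow_right 2)).pow_left k
    rw [hz, h2, h3, inv_pow, h.y_cube, mul_assoc, hzc.mul_inv, mul_assoc, inv_pow]
    congr 1
    have h23 : (commSeq x y 2)⁻¹ * (commSeq x y 3)⁻¹ = (commSeq x y 3)⁻¹ * (commSeq x y 2)⁻¹ :=
      (hc 1 2).inv_inv.eq
    simp [pow_two, mul_assoc, h23]

end Inversion

section Presentation

theorem map_fcomm {H K : Type*} [Group H] [Group K] (f : H →* K) (g h : H) :
    f (fcomm g h) = fcomm (f g) (f h) := by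
  simp [fcomm]

theorem map_commSeq {H K : Type*} [Group H] [Group K] (f : H →* K) (x y : H) (n : ℕ) :
    f (commSeq x y n) = commSeq (f x) (f y) n := by
  induction n with
  | zero => rfl
  | succ n ih => rw [commSeq, map_fcomm, ih, commSeq]

theorem fcomm_mem_commutator {H : Type*} [Group H] (g h : H) : fcomm g h ∈ commutator H := by
  have := Subgroup.commutator_mem_commutator (Subgroup.mem_top g⁻¹) (Subgroup.mem_top h⁻¹)
  rwa [commutatorElement_def, inv_inv, inv_inv] at this

/-- The values of the generators `x, y, t₃, s₂, …, s_c` forced by the values of `x` and `y`. -/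
def genMap {H : Type*} [Group H] (c : ℕ) (x y : H) : ℕ → H
  | 0 => x
  | 1 => y
  | 2 => fcomm (commSeq x y 1) y
  | j + 3 => if j + 2 ≤ c then commSeq x y (j + 1) else 1

theorem genMap_of_le {H : Type*} [Group H] {c j : ℕ} (x y : H) (hj : j + 2 ≤ c) :
    genMap c x y (j + 3) = commSeq x y (j + 1) := if_pos hj

theorem map_genMap {H K : Type*} [Group H] [Group K] (f : H →* K) (c : ℕ) (x y : H) (n : ℕ) :
    f (genMap c x y n) = genMap c (f x) (f y) n := by
  match n with
  | 0 => rfl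
  | 1 => rfl
  | 2 => simp only [genMap, map_fcomm, map_commSeq]
  | j + 3 =>
    simp only [genMap]
    split_ifs
    · exact map_commSeq f x y _
    · exact map_one f

theorem genMap_mem_commutator {H : Type*} [Group H] (c : ℕ) (x y : H) (n : ℕ) :
    genMap c x y (n + 2) ∈ commutator H := by
  cases n with
  | zero => exact fcomm_mem_commutator _ _
  | succ j =>
    change (if j + 2 ≤ c then commSeq x y (j + 1) else 1) ∈ _
    split_ifs
    · exact fcomm_mem_commutator _ _
    · exact one_mem _

theorem exists_of_mem_RxSet {c : ℕ} {Rx : FreeGroup ℕ} (h : Rx ∈ RxSet c) :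
    ∃ e ≤ 1, Rx = xw ^ 3 * (sw c ^ e)⁻¹ := by
  rcases h with rfl | rfl
  · exact ⟨0, by simp⟩
  · exact ⟨1, by simp⟩

theorem exists_of_mem_RySet {c : ℕ} {Ry : FreeGroup ℕ} (h : Ry ∈ RySet c) :
    ∃ k, Ry = yw ^ 3 * (sw 3 ^ 2)⁻¹ * (sw 4)⁻¹ * (sw c ^ k)⁻¹ := by
  rcases h with rfl | rfl | rfl
  · exact ⟨0, by simp⟩
  · exact ⟨1, by simp⟩
  · exact ⟨2, rfl⟩

variable {H : Type*} [Group H] {m e k : ℕ}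

theorem IsGQ.lift_eq_one {x y : H} (h : IsGQ m e k x y) :
    ∀ w ∈ rels (2 * m + 5) (xw ^ 3 * (sw (2 * m + 5) ^ e)⁻¹)
      (yw ^ 3 * (sw 3 ^ 2)⁻¹ * (sw 4)⁻¹ * (sw (2 * m + 5) ^ k)⁻¹),
      FreeGroup.lift (genMap (2 * m + 5) x y) w = 1 := by
  have hx : FreeGroup.lift (genMap (2 * m + 5) x y) xw = x := FreeGroup.lift_apply_of
  have hy : FreeGroup.lift (genMap (2 * m + 5) x y) yw = y := FreeGroup.lift_apply_of
  have ht : FreeGroup.lift (genMap (2 * m + 5) x y) t3w = fcomm (commSeq x y 1) y :=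
    FreeGroup.lift_apply_of
  have hs (j : ℕ) (hj : j ≤ 2 * m + 3) :
      FreeGroup.lift (genMap (2 * m + 5) x y) (sw (j + 2)) = commSeq x y (j + 1) :=
    FreeGroup.lift_apply_of.trans (genMap_of_le x y (by omega))
  rintro w (((((rfl | rfl | rfl | rfl | rfl | rfl)) | ⟨j, h3, hj, rfl⟩) | ⟨j, h2, hj, rfl⟩) |
    ⟨n, hn, rfl⟩)
  · rw [map_mul, map_inv, map_fcomm, hx, hy, hs 0 (by omega), mul_inv_eq_one]; rfl
  · rw [map_mul, map_inv, map_fcomm, ht, hy, hs 0 (by omega), mul_inv_eq_one]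
  · rw [map_pow, ht, h.third]
  · rw [map_mul, map_inv, map_pow, map_pow, hs (2 * m + 3) le_rfl,
      show 2 * m + 5 - 2 = 2 * m + 1 + 2 by omega, hs (2 * m + 1) (by omega), mul_inv_eq_one, h.top]
  · rw [map_mul, map_inv, map_pow, map_pow, hs (2 * m + 3) le_rfl, hx, mul_inv_eq_one, h.x_cube]
  · simp only [map_mul, map_inv, map_pow]
    rw [hs (2 * m + 3) le_rfl, hs 1 (by omega), hs 2 (by omega), hy, mul_inv_eq_one,
      mul_inv_eq_iff_eq_mul, mul_inv_eq_iff_eq_mul, h.y_cube]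
  · obtain ⟨i, rfl⟩ := Nat.exists_eq_add_of_le' h3
    rw [map_mul, map_inv, map_fcomm, hx, hs (i + 1) (by omega),
      show i + 3 - 1 = i + 2 by omega, hs i (by omega), mul_inv_eq_one]; rfl
  · obtain ⟨i, rfl⟩ := Nat.exists_eq_add_of_le' h2
    rw [map_mul, map_inv, map_mul, map_pow, map_pow, hs i (by omega), hs (i + 2) (by omega),
      show i + 2 + 3 = i + 3 + 2 by omega, hs (i + 3) (by omega), mul_inv_eq_one,
      h.cube (i + 1) (by omega) (by omega)]
  · obtain ⟨i, rfl⟩ := Nat.exists_eq_add_of_le' (show 3 ≤ n by omega)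
    exact FreeGroup.lift_apply_of.trans (if_neg (by omega))

theorem map_of_eq_genMap {c : ℕ} {Rx Ry : FreeGroup ℕ} (hc : 2 ≤ c) (f : FreeGroup ℕ →* H)
    (hf : ∀ w ∈ rels c Rx Ry, f w = 1) (n : ℕ) :
    f (FreeGroup.of n) = genMap c (f xw) (f yw) n := by
  have hs (j : ℕ) (hj : j + 2 ≤ c) : f (sw (j + 2)) = commSeq (f xw) (f yw) (j + 1) := by
    induction j with
    | zero =>
      have := hf (sw 2 * (fcomm yw xw)⁻¹) (by simp [rels])
      rwa [map_mul, map_inv, map_fcomm, mul_inv_eq_one] at this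
    | succ j ih =>
      have := hf (sw (j + 3) * (fcomm (sw (j + 3 - 1)) xw)⁻¹)
        (.inl (.inl (.inr ⟨j + 3, by omega, by omega, rfl⟩)))
      rw [map_mul, map_inv, map_fcomm, mul_inv_eq_one, show j + 3 - 1 = j + 2 by omega,
        ih (by omega)] at this
      exact this
  match n with
  | 0 => rfl
  | 1 => rfl
  | 2 =>
    have := hf (t3w * (fcomm (sw 2) yw)⁻¹) (by simp [rels])
    rw [map_mul, map_inv, map_fcomm, mul_inv_eq_one, hs 0 hc] at this
    exact this
  | j + 3 =>
    rw [genMap]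
    split_ifs with hj
    · exact hs j hj
    · exact hf _ (.inr ⟨j + 3, by omega, rfl⟩)

theorem isGQ_of_map_eq_one (f : FreeGroup ℕ →* H)
    (hf : ∀ w ∈ rels (2 * m + 5) (xw ^ 3 * (sw (2 * m + 5) ^ e)⁻¹)
      (yw ^ 3 * (sw 3 ^ 2)⁻¹ * (sw 4)⁻¹ * (sw (2 * m + 5) ^ k)⁻¹), f w = 1) :
    IsGQ m e k (f xw) (f yw) := by
  have hs (j : ℕ) (hj : j ≤ 2 * m + 3) : f (sw (j + 2)) = commSeq (f xw) (f yw) (j + 1) :=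
    (map_of_eq_genMap (by omega) f hf _).trans (genMap_of_le _ _ (by omega))
  have ht : f t3w = fcomm (commSeq (f xw) (f yw) 1) (f yw) :=
    map_of_eq_genMap (by omega) f hf 2
  constructor
  · intro i hi hi'
    obtain ⟨j, rfl⟩ := Nat.exists_eq_add_of_le' hi
    have := hf (sw (j + 2) ^ 3 * (sw (j + 2 + 2) ^ 2 * sw (j + 2 + 3))⁻¹)
      (.inl (.inr ⟨j + 2, by omega, by omega, rfl⟩))
    rwa [map_mul, map_inv, map_mul, map_pow, map_pow, hs j (by omega), hs (j + 2) (by omega),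
      show j + 2 + 3 = j + 3 + 2 by omega, hs (j + 3) (by omega), mul_inv_eq_one] at this
  · have := hf (sw (2 * m + 5 - 2) ^ 3 * (sw (2 * m + 5) ^ 2)⁻¹) (by simp [rels])
    rwa [map_mul, map_inv, map_pow, map_pow, hs (2 * m + 3) le_rfl,
      show 2 * m + 5 - 2 = 2 * m + 1 + 2 by omega, hs (2 * m + 1) (by omega),
      mul_inv_eq_one] at this
  · have := hf (t3w ^ 3) (by simp [rels])
    rwa [map_pow, ht] at this
  · have := hf (xw ^ 3 * (sw (2 * m + 5) ^ e)⁻¹) (by simp [rels])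
    rwa [map_mul, map_inv, map_pow, map_pow, hs (2 * m + 3) le_rfl, mul_inv_eq_one] at this
  · have := hf (yw ^ 3 * (sw 3 ^ 2)⁻¹ * (sw 4)⁻¹ * (sw (2 * m + 5) ^ k)⁻¹) (by simp [rels])
    simp only [map_mul, map_inv, map_pow] at this
    rwa [hs (2 * m + 3) le_rfl, hs 1 (by omega), hs 2 (by omega), mul_inv_eq_one,
      mul_inv_eq_iff_eq_mul, mul_inv_eq_iff_eq_mul] at this

theorem isGQ_of_mul_comm {H : Type*} [CommGroup H] (m e k : ℕ) {x : H} (hx : x ^ 3 = 1) :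
    IsGQ m e k x 1 := by
  have hs (n : ℕ) : commSeq x (1 : H) (n + 1) = 1 := by
    rw [commSeq, fcomm, mul_right_comm, inv_mul_cancel_right, inv_mul_cancel]
  constructor
  · intro i hi _
    obtain ⟨n, rfl⟩ := Nat.exists_eq_add_of_le' hi
    simp only [hs n, hs (n + 2), hs (n + 3), one_pow, one_mul]
  · simp only [hs (2 * m + 1), hs (2 * m + 3), one_pow]
  · simp [fcomm]
  · rw [hx, hs (2 * m + 3), one_pow]
  · simp only [hs (2 * m + 3), hs 1, hs 2, one_pow, one_mul]

theorem map_mul_self_mem {H : Type*} [Group H] {C : Subgroup H} (hC : commutator H ≤ C)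
    (σ : H →* H) {S : Set H} (hS : Subgroup.closure S = ⊤) (h : ∀ g ∈ S, σ g * g ∈ C) (g : H) :
    σ g * g ∈ C := by
  have hg : g ∈ Subgroup.closure S := hS ▸ Subgroup.mem_top g
  induction hg using Subgroup.closure_induction with
  | mem g hg => exact h g hg
  | one => simp
  | mul g g' _ _ hg hg' =>
    have : σ (g * g') * (g * g') = σ g * g * fcomm g (σ g')⁻¹ * (σ g' * g') := by
      simp [fcomm, mul_assoc]
    rw [this]
    exact mul_mem (mul_mem hg (hC (fcomm_mem_commutator _ _))) hg'
  | inv g _ hg =>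
    have : σ g⁻¹ * g⁻¹ = (σ g * g * fcomm g (σ g))⁻¹ := by
      simp [fcomm, mul_assoc]
    rw [this]
    exact inv_mem (mul_mem hg (hC (fcomm_mem_commutator _ _)))

end Presentation

theorem GQ_has_sigma_automorphism (c : ℕ) (hc : 5 ≤ c) (hodd : Odd c)
    (Rx : FreeGroup ℕ) (hRx : Rx ∈ RxSet c)
    (Ry : FreeGroup ℕ) (hRy : Ry ∈ RySet c) :
    ∃ σ : GQ c Rx Ry ≃* GQ c Rx Ry,
      (∀ g, σ (σ g) = g) ∧
      σ ≠ MulEquiv.refl (GQ c Rx Ry) ∧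
      ∀ g : GQ c Rx Ry, σ g * g ∈
        Subgroup.closure {w : GQ c Rx Ry |
          (∃ h : GQ c Rx Ry, h ^ 3 = w) ∨ w ∈ commutator (GQ c Rx Ry)} := by
  obtain ⟨m, rfl⟩ : ∃ m, c = 2 * m + 5 := by
    obtain ⟨l, rfl⟩ := hodd
    exact ⟨l - 2, by omega⟩
  obtain ⟨e, he, rfl⟩ := exists_of_mem_RxSet hRx
  obtain ⟨k, rfl⟩ := exists_of_mem_RySet hRy
  set R := rels (2 * m + 5) (xw ^ 3 * (sw (2 * m + 5) ^ e)⁻¹)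
    (yw ^ 3 * (sw 3 ^ 2)⁻¹ * (sw 4)⁻¹ * (sw (2 * m + 5) ^ k)⁻¹)
  have hmk : ∀ w ∈ R, PresentedGroup.mk R w = 1 := fun w hw => PresentedGroup.one_of_mem hw
  set x : PresentedGroup R := PresentedGroup.of 0
  set y : PresentedGroup R := PresentedGroup.of 1
  have hof (n : ℕ) : (PresentedGroup.of n : PresentedGroup R) = genMap (2 * m + 5) x y n :=
    map_of_eq_genMap (by omega) (PresentedGroup.mk R) hmk n
  have hG : IsGQ m e k x y := isGQ_of_map_eq_one (PresentedGroup.mk R) hmk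
  let σ : PresentedGroup R →* PresentedGroup R := PresentedGroup.toGroup (hG.inv he).lift_eq_one
  have hσ (n : ℕ) : σ (PresentedGroup.of n) = genMap (2 * m + 5) x⁻¹ y⁻¹ n :=
    PresentedGroup.toGroup.of _
  have hσx : σ x = x⁻¹ := hσ 0
  have hσy : σ y = y⁻¹ := hσ 1
  have hσσ : σ.comp σ = MonoidHom.id _ := by
    ext n
    rw [MonoidHom.comp_apply, hσ, map_genMap, map_inv, map_inv, hσx, hσy, inv_inv, inv_inv, ← hof,
      MonoidHom.id_apply]
  refine ⟨MonoidHom.toMulEquiv σ σ hσσ hσσ, DFunLike.congr_fun hσσ, fun hid => ?_, ?_⟩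
  · let χ : PresentedGroup R →* Multiplicative (ZMod 3) := PresentedGroup.toGroup
      (isGQ_of_mul_comm m e k (x := Multiplicative.ofAdd (1 : ZMod 3)) rfl).lift_eq_one
    have hχ : χ x = Multiplicative.ofAdd (1 : ZMod 3) := PresentedGroup.toGroup.of _
    have hx : x⁻¹ = x := hσx ▸ DFunLike.congr_fun hid x
    have := congrArg χ hx
    rw [map_inv, hχ] at this
    exact absurd this (by decide)
  · have hC : commutator (PresentedGroup R) ≤ Subgroup.closure {w : PresentedGroup R |
        (∃ h : PresentedGroup R, h ^ 3 = w) ∨ w ∈ commutator (PresentedGroup R)} :=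
      fun w hw => Subgroup.subset_closure (.inr hw)
    refine map_mul_self_mem hC σ (PresentedGroup.closure_range_of R) ?_
    rintro _ ⟨n, rfl⟩
    rw [hσ, hof]
    match n with
    | 0 => simp [genMap]
    | 1 => simp [genMap]
    | n + 2 => exact hC (mul_mem (genMap_mem_commutator _ _ _ n) (genMap_mem_commutator _ _ _ n))
end

section
/- Fix an odd integer c ≥ 5. Then the six groups G_U(c, R_y, R_x), obtained from the six choices of relator words R_y ∈ {y³·s₃⁻¹, y³·s₃⁻¹·t_c⁻¹} and R_x ∈ {x³·t₃⁻¹·t₄⁻²·t₅⁻¹, x³·t₃⁻¹·t₄⁻²·t₅⁻¹·t_c⁻¹, x³·t₃⁻¹·t₄⁻²·t₅⁻¹·t_c⁻²}, are pairwise non-isomorphic. -/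
namespace GUdef

/-- The generator `x` (as a word in the free group). -/
def xw : FreeGroup ℕ := FreeGroup.of 0

/-- The generator `y`. -/
def yw : FreeGroup ℕ := FreeGroup.of 1

/-- The generator `s₃`. -/
def s3w : FreeGroup ℕ := FreeGroup.of 2

/-- The generator `t_j` (meaningful for `2 ≤ j ≤ c`). -/
def tw (j : ℕ) : FreeGroup ℕ := FreeGroup.of (j + 1)

/-- The defining relators of `G_U(c, R_y, R_x)`:
`t₂ = [y,x]`, `s₃ = [t₂,x]`, `t_j = [t_{j−1},y]` for `3 ≤ j ≤ c`,
`t_j³ = t_{j+2}²·t_{j+3}` for `2 ≤ j ≤ c−3`, `t_{c−2}³ = t_c²`, `s₃³ = 1`,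
`R_y = 1`, `R_x = 1`.  (The superfluous generators `FreeGroup.of n` with
`n ≥ c+2` are killed, so that the effective generators are exactly
`x, y, s₃, t₂, …, t_c`.) -/
def rels (c : ℕ) (Ry Rx : FreeGroup ℕ) : Set (FreeGroup ℕ) :=
  {tw 2 * (fcomm yw xw)⁻¹, s3w * (fcomm (tw 2) xw)⁻¹, s3w ^ 3,
    tw (c - 2) ^ 3 * (tw c ^ 2)⁻¹, Ry, Rx} ∪
  {w | ∃ j : ℕ, 3 ≤ j ∧ j ≤ c ∧ w = tw j * (fcomm (tw (j - 1)) yw)⁻¹} ∪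
  {w | ∃ j : ℕ, 2 ≤ j ∧ j ≤ c - 3 ∧ w = tw j ^ 3 * (tw (j + 2) ^ 2 * tw (j + 3))⁻¹} ∪
  {w | ∃ n : ℕ, c + 2 ≤ n ∧ w = FreeGroup.of n}

/-- The group `G_U(c, R_y, R_x)`. -/
abbrev GU (c : ℕ) (Ry Rx : FreeGroup ℕ) : Type := PresentedGroup (rels c Ry Rx)

/-- The two admissible relator words `R_y ∈ {y³·s₃⁻¹, y³·s₃⁻¹·t_c⁻¹}`. -/
def RySet (c : ℕ) : Set (FreeGroup ℕ) := {yw ^ 3 * s3w⁻¹, yw ^ 3 * s3w⁻¹ * (tw c)⁻¹}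

/-- The three admissible relator words
`R_x ∈ {x³·t₃⁻¹·t₄⁻²·t₅⁻¹, x³·t₃⁻¹·t₄⁻²·t₅⁻¹·t_c⁻¹, x³·t₃⁻¹·t₄⁻²·t₅⁻¹·t_c⁻²}`. -/
def RxSet (c : ℕ) : Set (FreeGroup ℕ) :=
  {xw ^ 3 * (tw 3)⁻¹ * (tw 4 ^ 2)⁻¹ * (tw 5)⁻¹,
   xw ^ 3 * (tw 3)⁻¹ * (tw 4 ^ 2)⁻¹ * (tw 5)⁻¹ * (tw c)⁻¹,
   xw ^ 3 * (tw 3)⁻¹ * (tw 4 ^ 2)⁻¹ * (tw 5)⁻¹ * (tw c ^ 2)⁻¹}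

end GUdef

open GUdef

open scoped DualNumber

/-- A commutative ring of order `3 ^ c` whose ideals are the powers of `p`, where
`3 + 3p + p² + b p^(c-1) = 0`; the map `res` is reduction modulo `p²`. -/
structure EisensteinFrame (R : Type*) [CommRing R] (c b : ℕ) where
  p : R
  res : R →+* DualNumber (ZMod 3)
  res_p : res p = ε
  five_le : 5 ≤ c
  pow_eq_zero : p ^ c = 0
  eisenstein : 3 + 3 * p + p ^ 2 + b * p ^ (c - 1) = 0
  top_ne_zero : p ^ (c - 1) ≠ 0
  dvd_of_fst_res : ∀ u, (res u).fst = 0 → p ∣ u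

namespace EisensteinFrame

section Existence

local notation "𝓞₃" => QuadraticAlgebra ℤ (-3) (-3)

open QuadraticAlgebra

/-- The element `√-3 = 3 + 2ϖ` of `ℤ[ϖ]`, where `ϖ² + 3ϖ + 3 = 0`. -/
def sqrtNegThree : 𝓞₃ := ⟨3, 2⟩

lemma sqrtNegThree_sq : sqrtNegThree ^ 2 = -3 := by
  rw [sq]; ext <;> simp [sqrtNegThree]

lemma omega_eq_sqrtNegThree_mul : (ω : 𝓞₃) = sqrtNegThree * ⟨2, 1⟩ := by
  ext <;> simp [sqrtNegThree]

lemma sqrtNegThree_eq : sqrtNegThree = 3 + 2 * (ω : 𝓞₃) := by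
  ext <;> simp [sqrtNegThree]

lemma omega_quadratic : (ω : 𝓞₃) ^ 2 + 3 * ω + 3 = 0 := by
  rw [sq]; ext <;> simp

lemma sqrtNegThree_pow_even_notMem (m : ℕ) (z : 𝓞₃) :
    sqrtNegThree ^ (2 * m) ≠ sqrtNegThree ^ (2 * m + 1) * z := by
  intro h
  rw [pow_succ, pow_mul, sqrtNegThree_sq, mul_assoc] at h
  have h3 : ((-3 : 𝓞₃)) ^ m = algebraMap ℤ _ ((-3) ^ m) := by simp
  rw [h3] at h
  have hre := congrArg QuadraticAlgebra.re h
  simp only [QuadraticAlgebra.re_mul, QuadraticAlgebra.algebraMap_re, sqrtNegThree] at hre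
  rw [show (algebraMap ℤ 𝓞₃ ((-3) ^ m)).im = 0 from rfl, mul_zero, zero_mul, add_zero] at hre
  have := mul_left_cancel₀ (pow_ne_zero m (by norm_num)) ((mul_one _).trans hre)
  omega

/-- Reduction of `ℤ[ϖ]` modulo `3`. -/
noncomputable def dualReduction : 𝓞₃ →+* DualNumber (ZMod 3) :=
  (QuadraticAlgebra.lift (R := ℤ) (a := -3) (b := -3) ⟨(ε : DualNumber (ZMod 3)), by
    ext <;> simp <;> decide⟩).toRingHom

lemma dualReduction_apply (z : 𝓞₃) :
    dualReduction z = z.re • (1 : DualNumber (ZMod 3)) + z.im • ε := rfl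

lemma dualReduction_sqrtNegThree : dualReduction sqrtNegThree = -ε := by
  rw [dualReduction_apply]
  ext <;> simp [sqrtNegThree] <;> decide

lemma dualReduction_sqrtNegThree_pow {n : ℕ} (hn : 2 ≤ n) :
    dualReduction (sqrtNegThree ^ n) = 0 := by
  obtain ⟨k, rfl⟩ := Nat.exists_eq_add_of_le hn
  rw [map_pow, dualReduction_sqrtNegThree, pow_add, sq]
  simp

lemma exists_frame (c b : ℕ) (hc : 5 ≤ c) (hodd : Odd c) :
    ∃ (R : Type) (_ : CommRing R), Nonempty (EisensteinFrame R c b) := by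
  obtain ⟨m, rfl⟩ := hodd
  set θ : 𝓞₃ := sqrtNegThree with hθ
  set I : Ideal 𝓞₃ := Ideal.span {θ ^ (2 * m + 1)} with hI
  have hmk0 : Ideal.Quotient.mk I (θ ^ (2 * m + 1)) = 0 :=
    Ideal.Quotient.eq_zero_iff_mem.2 (Ideal.subset_span rfl)
  obtain ⟨k, hk⟩ : ∃ k, 2 * m - 1 = k + 2 := ⟨2 * m - 3, by omega⟩
  set p₀ : 𝓞₃ := (ω : 𝓞₃) - (b : 𝓞₃) * θ ^ (2 * m - 1) with hp₀
  obtain ⟨j, hj⟩ : ∃ j : 𝓞₃, p₀ = θ * (θ * j - 1) := by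
    refine ⟨(⟨2, 1⟩ - θ) - b * θ ^ k, ?_⟩
    have h3 := sqrtNegThree_sq
    have hω := omega_eq_sqrtNegThree_mul
    rw [← hθ] at h3 hω
    have hd : (⟨2, 1⟩ : 𝓞₃) = ω + 2 := by ext <;> simp
    rw [hp₀, hk, pow_add]
    rw [hd] at hω ⊢
    linear_combination (1 + θ) * hω + θ * h3
  have hpow : θ ^ (2 * m + 1) ∣ p₀ ^ (2 * m) - θ ^ (2 * m) := by
    have : θ ∣ (θ * j - 1) ^ (2 * m) - (-1) ^ (2 * m) :=
      dvd_trans ⟨j, by ring⟩ (sub_dvd_pow_sub_pow _ _ _)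
    rw [(even_two_mul m).neg_one_pow] at this
    obtain ⟨w, hw⟩ := this
    refine ⟨w, ?_⟩
    rw [hj, mul_pow, pow_succ]
    linear_combination θ ^ (2 * m) * hw
  have hlift : ∀ z ∈ I, dualReduction z = 0 := by
    intro z hz
    obtain ⟨w, rfl⟩ := Ideal.mem_span_singleton'.1 hz
    rw [map_mul, dualReduction_sqrtNegThree_pow (by omega), mul_zero]
  refine ⟨𝓞₃ ⧸ I, inferInstance, ⟨?_⟩⟩
  refine
    { p := Ideal.Quotient.mk I p₀
      res := Ideal.Quotient.lift I dualReduction hlift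
      res_p := ?_
      five_le := hc
      pow_eq_zero := ?_
      eisenstein := ?_
      top_ne_zero := ?_
      dvd_of_fst_res := ?_ }
  · rw [Ideal.Quotient.lift_mk, hp₀, map_sub, map_mul, dualReduction_sqrtNegThree_pow (by omega)]
    simp [dualReduction_apply]
  · rw [hj, ← map_pow, mul_pow, map_mul, hmk0, zero_mul]
  · obtain ⟨w, hw⟩ := hpow
    have hsq : θ ^ (2 * m - 1) * θ ^ (2 * m - 1) = θ ^ (2 * m + 1) * θ ^ (2 * m - 3) := by
      rw [← pow_add, ← pow_add]; congr 1; omega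
    have hsucc : θ ^ (2 * m - 1) * θ = θ ^ (2 * m) := by
      rw [← pow_succ]; congr 1; omega
    have h := omega_quadratic
    have h2 := sqrtNegThree_eq
    rw [← hθ] at h2
    have key : 3 + 3 * p₀ + p₀ ^ 2 + b * p₀ ^ (2 * m) =
        θ ^ (2 * m + 1) * (b ^ 2 * θ ^ (2 * m - 3) + b * w) := by
      rw [hp₀] at hw ⊢
      linear_combination h + b * hw + b ^ 2 * hsq - b * hsucc + b * θ ^ (2 * m - 1) * h2
    have := congrArg (Ideal.Quotient.mk I) key
    rw [map_mul, hmk0, zero_mul] at this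
    simpa only [map_add, map_mul, map_pow, map_natCast, map_ofNat, map_zero,
      Nat.add_sub_cancel] using this
  · obtain ⟨w, hw⟩ := hpow
    intro h
    rw [Nat.add_sub_cancel, ← map_pow, Ideal.Quotient.eq_zero_iff_mem] at h
    obtain ⟨z, hz⟩ := Ideal.mem_span_singleton'.1 h
    refine sqrtNegThree_pow_even_notMem m (z - w) ?_
    linear_combination -hw - hz
  · intro u hu
    obtain ⟨z, rfl⟩ := Ideal.Quotient.mk_surjective u
    rw [Ideal.Quotient.lift_mk, dualReduction_apply] at hu
    have hu' : ((z.re : ℤ) : ZMod 3) = 0 := by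
      rw [← hu, TrivSqZeroExt.fst_add, TrivSqZeroExt.fst_smul, TrivSqZeroExt.fst_smul]
      simp
    obtain ⟨s, hs⟩ := (ZMod.intCast_zmod_eq_zero_iff_dvd _ 3).1 hu'
    have hθz : θ ∣ z := by
      refine ⟨-(θ * s) + (⟨2, 1⟩ : 𝓞₃) * (z.im : 𝓞₃), ?_⟩
      have h3 := sqrtNegThree_sq
      have hω := omega_eq_sqrtNegThree_mul
      rw [← hθ] at h3 hω
      have hz : z = 3 * (s : 𝓞₃) + (ω : 𝓞₃) * (z.im : 𝓞₃) := by
        ext <;> simp [hs]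
      rw [hω] at hz
      linear_combination hz + (s : 𝓞₃) * h3
    have hunit : IsUnit (Ideal.Quotient.mk I (θ * j - 1)) := by
      rw [map_sub, map_one]
      refine IsNilpotent.isUnit_sub_one ⟨2 * m + 1, ?_⟩
      rw [← map_pow, mul_pow, map_mul, hmk0, zero_mul]
    rw [hj, map_mul]
    exact hunit.mul_right_dvd.2 (map_dvd _ hθz)

end Existence

variable {R : Type*} [CommRing R] {c b : ℕ} (F : EisensteinFrame R c b)

/-- The residue of `u` modulo `p`. -/
def coeff₀ : R →+* ZMod 3 := (TrivSqZeroExt.fstHom ℤ (ZMod 3) (ZMod 3)).toRingHom.comp F.res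

/-- The coefficient of `p` in `u` modulo `p²`. -/
def coeff₁ : R →+ ZMod 3 where
  toFun u := (F.res u).snd
  map_zero' := by simp
  map_add' := by simp

lemma coeff₁_mul (u v : R) :
    F.coeff₁ (u * v) = F.coeff₀ u * F.coeff₁ v + F.coeff₁ u * F.coeff₀ v := by
  change (F.res (u * v)).snd = (F.res u).fst * (F.res v).snd + (F.res u).snd * (F.res v).fst
  rw [map_mul, DualNumber.snd_mul]

@[simp] lemma coeff₁_one : F.coeff₁ 1 = 0 := by
  change (F.res 1).snd = 0
  simp

@[simp] lemma coeff₁_natCast (n : ℕ) : F.coeff₁ (n : R) = 0 := by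
  rw [← nsmul_one, map_nsmul, coeff₁_one, smul_zero]

@[simp] lemma coeff₀_p : F.coeff₀ F.p = 0 := by
  change (F.res F.p).fst = 0
  simp [F.res_p]

@[simp] lemma coeff₁_p : F.coeff₁ F.p = 1 := by
  change (F.res F.p).snd = 1
  simp [F.res_p]

lemma exists_eq_p_mul {u : R} (hu : F.coeff₀ u = 0) :
    ∃ w, u = F.p * w ∧ F.coeff₀ w = F.coeff₁ u := by
  obtain ⟨w, rfl⟩ := F.dvd_of_fst_res u hu
  exact ⟨w, rfl, by simp [coeff₁_mul]⟩

lemma pow_of_le {n : ℕ} (hn : c ≤ n) : F.p ^ n = 0 :=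
  pow_eq_zero_of_le hn F.pow_eq_zero

lemma top_mul_p : F.p ^ (c - 1) * F.p = 0 := by
  rw [← pow_succ]
  exact F.pow_of_le (by omega)

lemma three_mul_top : 3 * F.p ^ (c - 1) = 0 := by
  have h5 := F.five_le
  have h2 : F.p ^ (c - 1) * F.p ^ (c - 1) = 0 := by
    rw [← pow_add]
    exact F.pow_of_le (by omega)
  linear_combination F.p ^ (c - 1) * F.eisenstein - (3 + F.p) * F.top_mul_p - (b : R) * h2

/-- The `𝔽₃`-line spanned by `p ^ (c - 1)`, the annihilator of `p`. -/
def top : ZMod 3 →+ R :=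
  ZMod.lift 3 ⟨(zmultiplesHom R) (F.p ^ (c - 1)), by simpa using F.three_mul_top⟩

lemma top_natCast (n : ℕ) : F.top (n : ZMod 3) = n * F.p ^ (c - 1) := by
  have := ZMod.lift_coe 3 ⟨(zmultiplesHom R) (F.p ^ (c - 1)), by simpa using F.three_mul_top⟩ n
  simpa [top] using this

lemma top_one : F.top 1 = F.p ^ (c - 1) := by
  simpa using F.top_natCast 1

lemma top_mul (u : R) : F.p ^ (c - 1) * u = F.top (F.coeff₀ u) := by
  have h : F.coeff₀ (u - ((F.coeff₀ u).val : R)) = 0 := by simp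
  obtain ⟨w, hw, -⟩ := F.exists_eq_p_mul h
  have h2 := F.top_natCast (F.coeff₀ u).val
  rw [ZMod.natCast_zmod_val] at h2
  rw [h2]
  linear_combination F.p ^ (c - 1) * hw + w * F.top_mul_p

lemma top_eq_zero {k : ZMod 3} (h : F.top k = 0) : k = 0 := by
  have h1 := F.top_ne_zero
  rw [← F.top_one] at h1
  fin_cases k
  · rfl
  · exact absurd h h1
  · have : F.top (-1) = 0 := h
    rw [map_neg, neg_eq_zero] at this
    exact absurd this h1

lemma top_mul_right (k : ZMod 3) (u : R) : F.top k * u = F.top (k * F.coeff₀ u) := by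
  rw [← ZMod.natCast_zmod_val k, F.top_natCast, mul_assoc, F.top_mul,
    ← nsmul_eq_mul, ← nsmul_eq_mul, map_nsmul]

lemma coeff₁_p_pow {n : ℕ} (hn : 2 ≤ n) : F.coeff₁ (F.p ^ n) = 0 := by
  obtain ⟨k, rfl⟩ := Nat.exists_eq_add_of_le hn
  rw [pow_add, sq]
  simp [coeff₁_mul]

@[simp] lemma coeff₀_top (k : ZMod 3) : F.coeff₀ (F.top k) = 0 := by
  have h5 := F.five_le
  rw [← ZMod.natCast_zmod_val k, F.top_natCast]
  simp [show c - 1 ≠ 0 by omega]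

@[simp] lemma coeff₁_top (k : ZMod 3) : F.coeff₁ (F.top k) = 0 := by
  have h5 := F.five_le
  rw [← ZMod.natCast_zmod_val k, F.top_natCast, coeff₁_mul, F.coeff₁_p_pow (by omega)]
  simp [show c - 1 ≠ 0 by omega]

lemma coeff₀_eq_zero_of_p_pow_mul {n : ℕ} (hn : n < c) {u : R} (h : F.p ^ n * u = 0) :
    F.coeff₀ u = 0 := by
  apply F.top_eq_zero
  rw [← F.top_mul, show c - 1 = (c - 1 - n) + n by omega, pow_add, mul_assoc, h, mul_zero]

lemma one_add_p_pow_three : (1 + F.p) ^ 3 = 1 := by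
  linear_combination F.p * F.eisenstein - b * F.top_mul_p

/-- The power `(1 + p) ^ r` of the cube root of unity `1 + p`. -/
def root (r : ZMod 9) : R := (1 + F.p) ^ r.val

lemma root_add (r s : ZMod 9) : F.root (r + s) = F.root r * F.root s := by
  have h9 : (1 + F.p) ^ 9 = 1 := by
    rw [show 9 = 3 * 3 from rfl, pow_mul, F.one_add_p_pow_three, one_pow]
  rw [root, root, root, ZMod.val_add, ← pow_add, ← pow_eq_pow_mod _ h9]

@[simp] lemma root_zero : F.root 0 = 1 := by simp [root]

lemma root_one : F.root 1 = 1 + F.p := by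
  rw [root, show (1 : ZMod 9).val = 1 from rfl, pow_one]

@[simp] lemma coeff₀_root (r : ZMod 9) : F.coeff₀ (F.root r) = 1 := by simp [root]

@[simp] lemma coeff₁_root (r : ZMod 9) :
    F.coeff₁ (F.root r) = ZMod.castHom (show 3 ∣ 9 by norm_num) (ZMod 3) r := by
  have h (n : ℕ) : F.coeff₁ ((1 + F.p) ^ n) = n := by
    induction n with
    | zero => simp
    | succ n ih => rw [pow_succ, coeff₁_mul, ih]; simp [add_comm]
  rw [root, h]
  simp

lemma root_mod_three (r : ZMod 9) :
    F.root r = (1 + F.p) ^ (ZMod.castHom (show 3 ∣ 9 by norm_num) (ZMod 3) r).val := by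
  rw [root, pow_eq_pow_mod _ F.one_add_p_pow_three]
  congr 1

/-- The inclusion of `ℤ/3` into `ℤ/9`. -/
def _root_.ZMod.threeMul : ZMod 3 →+ ZMod 9 :=
  ZMod.lift 3 ⟨(zmultiplesHom (ZMod 9)) 3, by decide⟩

lemma _root_.ZMod.threeMul_injective : Function.Injective ZMod.threeMul := by
  decide

@[simp] lemma root_threeMul (k : ZMod 3) : F.root (ZMod.threeMul k) = 1 := by
  rw [root_mod_three, show ZMod.castHom (show 3 ∣ 9 by norm_num) (ZMod 3) (ZMod.threeMul k) = 0 by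
    revert k; decide]
  simp

/-- The alternating form on `R / p²` with values in `𝔽₃`. -/
def form (u v : R) : ZMod 3 := F.coeff₁ u * F.coeff₀ v - F.coeff₀ u * F.coeff₁ v

end EisensteinFrame

open EisensteinFrame

/-- A concrete group of order `3 ^ (c + 2)`: the pair `(u, r)` stands for `y ^ r` times an element
of the Heisenberg-type group on `R`, and the centre contains `(0, 3)` and `(p ^ (c - 1), 0)`. -/
@[ext] structure FrameGroup {R : Type*} [CommRing R] {c b : ℕ} (F : EisensteinFrame R c b)
    (a : ℕ) where
  fst : R
  snd : ZMod 9

namespace FrameGroup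

open ZMod (threeMul)

variable {R : Type*} [CommRing R] {c b : ℕ} {F : EisensteinFrame R c b} {a : ℕ}

instance : Mul (FrameGroup F a) where
  mul g h :=
    ⟨F.root h.snd * g.fst + h.fst + F.top (a * F.form (F.root h.snd * g.fst) h.fst),
      g.snd + h.snd + threeMul (F.form (F.root h.snd * g.fst) h.fst)⟩

instance : One (FrameGroup F a) := ⟨⟨0, 0⟩⟩

instance : Inv (FrameGroup F a) := ⟨fun g => ⟨-(F.root (-g.snd) * g.fst), -g.snd⟩⟩

lemma mk_mul_mk (u v : R) (r s : ZMod 9) : (⟨u, r⟩ : FrameGroup F a) * ⟨v, s⟩ =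
    ⟨F.root s * u + v + F.top (a * F.form (F.root s * u) v),
      r + s + threeMul (F.form (F.root s * u) v)⟩ := rfl

lemma one_def : (1 : FrameGroup F a) = ⟨0, 0⟩ := rfl

lemma form_root_mul (r s : ZMod 9) (u v w : R) (k : ZMod 3) :
    F.form (F.root s * (F.root r * u + v + F.top k)) w =
      F.form (F.root r * F.root s * u) w + F.form (F.root s * v) w := by
  simp only [form, coeff₁_mul, map_add, map_mul, coeff₀_root, coeff₀_top, coeff₁_top]
  ring

lemma form_root_mul_add (r s : ZMod 9) (u v w : R) (k : ZMod 3) :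
    F.form (F.root r * F.root s * u) (F.root s * v + w + F.top k) =
      F.form (F.root r * u) v + F.form (F.root r * F.root s * u) w := by
  simp only [form, coeff₁_mul, map_add, map_mul, coeff₀_root, coeff₀_top, coeff₁_top]
  ring

instance : Group (FrameGroup F a) :=
  Group.ofLeftAxioms
    (by
      rintro ⟨u, r⟩ ⟨v, s⟩ ⟨w, t⟩
      simp only [mk_mul_mk, root_add, root_threeMul, mul_one, form_root_mul, form_root_mul_add]
      ext
      · simp only [mul_add, map_add]
        rw [mul_comm (F.root t) (F.top _), top_mul_right, coeff₀_root, mul_one]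
        ring
      · simp only [map_add]
        ring)
    (by
      rintro ⟨u, r⟩
      ext <;> simp [one_def, mk_mul_mk, form])
    (by
      rintro ⟨u, r⟩
      have h : F.root r * F.root (-r) = 1 := by rw [← root_add]; simp
      change (⟨-(F.root (-r) * u), -r⟩ : FrameGroup F a) * ⟨u, r⟩ = ⟨0, 0⟩
      have h2 : F.root r * -(F.root (-r) * u) = -u := by linear_combination -u * h
      rw [mk_mul_mk, h2]
      have h3 : F.form (-u) u = 0 := by simp only [form, map_neg]; ring
      simp [h3])

lemma mul_mk_of_form_eq_zero {u v : R} {r : ZMod 9} {k : ZMod 3} (h : F.form u v = 0) :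
    (⟨u, r⟩ : FrameGroup F a) * ⟨v, threeMul k⟩ = ⟨u + v, r + threeMul k⟩ := by
  simp [mk_mul_mk, h]

lemma mk_threeMul_pow (u : R) (k : ZMod 3) (n : ℕ) :
    (⟨u, threeMul k⟩ : FrameGroup F a) ^ n = ⟨n * u, threeMul (n * k)⟩ := by
  induction n with
  | zero => simp [one_def]
  | succ n ih =>
    rw [pow_succ, ih, mul_mk_of_form_eq_zero, ← map_add]
    · push_cast; congr 1 <;> ring_nf
    · simp only [form, coeff₁_mul, map_mul]
      rw [coeff₁_natCast]; ring

lemma _root_.fcomm_eq_of_mul {G : Type*} [Group G] {g h k : G} (e : h * g * k = g * h) :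
    fcomm g h = k := by
  rw [fcomm, mul_assoc, ← mul_inv_rev, ← e, inv_mul_cancel_left]

lemma fcomm_mk (u v : R) (r s : ZMod 9) {d : R} {k : ZMod 3}
    (hd : d = (F.root s - 1) * u - (F.root r - 1) * v)
    (hk : k = F.form (F.root s * u) v - F.form (F.root r * v) u - F.form (F.root r * v + u) d) :
    fcomm (⟨u, r⟩ : FrameGroup F a) ⟨v, s⟩ = ⟨d + F.top (a * k), threeMul k⟩ := by
  apply fcomm_eq_of_mul
  have h (x : ZMod 3) : F.form (F.root r * v + u + F.top x) (d + F.top (a * k)) =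
      F.form (F.root r * v + u) d := by
    simp [form]
  simp only [mk_mul_mk, root_threeMul, one_mul, h]
  have hk' : F.form (F.root s * u) v =
      F.form (F.root r * v) u + F.form (F.root r * v + u) d + k := by rw [hk]; ring
  rw [hk']
  simp only [mul_add, map_add]
  ext
  · rw [hd]; ring
  · ring

end FrameGroup

/-- The defining relations of `GU`, with exponents `α` and `β` of `t_c` in `R_y` and `R_x`, for
elements `x`, `y`, `s` and `t j` of a group. -/
structure IsUSystem {G : Type*} [Group G] (c α β : ℕ) (x y s : G) (t : ℕ → G) : Prop where
  t_two : t 2 = fcomm y x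
  s_eq : s = fcomm (t 2) x
  s_pow : s ^ 3 = 1
  t_pow_last : t (c - 2) ^ 3 = t c ^ 2
  y_pow : y ^ 3 = t c ^ α * s
  x_pow : x ^ 3 = t c ^ β * t 5 * t 4 ^ 2 * t 3
  t_step : ∀ j, 3 ≤ j → j ≤ c → t j = fcomm (t (j - 1)) y
  t_pow : ∀ j, 2 ≤ j → j ≤ c - 3 → t j ^ 3 = t (j + 2) ^ 2 * t (j + 3)

namespace GUdef

/-- The word `y³ s₃⁻¹ t_c^(-α)`. -/
def ryWord (c α : ℕ) : FreeGroup ℕ := yw ^ 3 * s3w⁻¹ * (tw c ^ α)⁻¹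

/-- The word `x³ t₃⁻¹ t₄⁻² t₅⁻¹ t_c^(-β)`. -/
def rxWord (c β : ℕ) : FreeGroup ℕ :=
  xw ^ 3 * (tw 3)⁻¹ * (tw 4 ^ 2)⁻¹ * (tw 5)⁻¹ * (tw c ^ β)⁻¹

lemma exists_eq_ryWord {c : ℕ} {w : FreeGroup ℕ} (hw : w ∈ RySet c) :
    ∃ α < 2, w = ryWord c α := by
  rcases hw with rfl | rfl
  · exact ⟨0, by norm_num, by simp [ryWord]⟩
  · exact ⟨1, by norm_num, by simp [ryWord]⟩

lemma exists_eq_rxWord {c : ℕ} {w : FreeGroup ℕ} (hw : w ∈ RxSet c) :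
    ∃ β < 3, w = rxWord c β := by
  rcases hw with rfl | rfl | rfl
  · exact ⟨0, by norm_num, by simp [rxWord]⟩
  · exact ⟨1, by norm_num, by simp [rxWord]⟩
  · exact ⟨2, by norm_num, by simp [rxWord]⟩

lemma lift_rels_iff {G : Type*} [Group G] (f : ℕ → G) (c α β : ℕ) :
    (∀ w ∈ rels c (ryWord c α) (rxWord c β), FreeGroup.lift f w = 1) ↔
      IsUSystem c α β (f 0) (f 1) (f 2) (fun j => f (j + 1)) ∧ ∀ n, c + 2 ≤ n → f n = 1 := by
  have hx : FreeGroup.lift f xw = f 0 := by simp [xw]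
  have hy : FreeGroup.lift f yw = f 1 := by simp [yw]
  have hs : FreeGroup.lift f s3w = f 2 := by simp [s3w]
  have ht (j : ℕ) : FreeGroup.lift f (tw j) = f (j + 1) := by simp [tw]
  have hcomm (g h : FreeGroup ℕ) : FreeGroup.lift f (fcomm g h) =
      fcomm (FreeGroup.lift f g) (FreeGroup.lift f h) := by simp [fcomm]
  constructor
  · intro H
    refine ⟨⟨?_, ?_, ?_, ?_, ?_, ?_, fun j h3 hj => ?_, fun j h2 hj => ?_⟩, fun n hn => ?_⟩
    · simpa [hx, hy, ht, hcomm, mul_inv_eq_one] using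
        H (tw 2 * (fcomm yw xw)⁻¹) (by simp [rels])
    · simpa [hx, hs, ht, hcomm, mul_inv_eq_one] using
        H (s3w * (fcomm (tw 2) xw)⁻¹) (by simp [rels])
    · have := H (s3w ^ 3) (by simp [rels])
      rwa [map_pow, hs] at this
    · have := H (tw (c - 2) ^ 3 * (tw c ^ 2)⁻¹) (by simp [rels])
      simp only [map_mul, map_pow, map_inv, ht] at this
      rwa [mul_inv_eq_one] at this
    · have := H (ryWord c α) (by simp [rels])
      simp only [ryWord, map_mul, map_pow, map_inv, hy, hs, ht] at this
      rwa [mul_inv_eq_one, mul_inv_eq_iff_eq_mul] at this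
    · have := H (rxWord c β) (by simp [rels])
      simp only [rxWord, map_mul, map_pow, map_inv, hx, ht] at this
      rwa [mul_inv_eq_one, mul_inv_eq_iff_eq_mul, mul_inv_eq_iff_eq_mul,
        mul_inv_eq_iff_eq_mul] at this
    · simpa [hy, ht, hcomm, mul_inv_eq_one] using
        H (tw j * (fcomm (tw (j - 1)) yw)⁻¹) (.inl (.inl (.inr ⟨j, h3, hj, rfl⟩)))
    · have := H (tw j ^ 3 * (tw (j + 2) ^ 2 * tw (j + 3))⁻¹) (.inl (.inr ⟨j, h2, hj, rfl⟩))
      simp only [map_mul, map_pow, map_inv, ht] at this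
      rwa [mul_inv_eq_one] at this
    · simpa using H (FreeGroup.of n) (.inr ⟨n, hn, rfl⟩)
  · rintro ⟨H, Hn⟩ w hw
    rcases hw with ((hw | ⟨j, h3, hj, rfl⟩) | ⟨j, h2, hj, rfl⟩) | ⟨n, hn, rfl⟩
    · rcases hw with rfl | rfl | rfl | rfl | rfl | rfl
      · simpa [hx, hy, ht, hcomm, mul_inv_eq_one] using H.t_two
      · simpa [hx, hs, ht, hcomm, mul_inv_eq_one] using H.s_eq
      · simpa [hs] using H.s_pow
      · simpa [ht, mul_inv_eq_one] using H.t_pow_last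
      · simp only [ryWord, map_mul, map_pow, map_inv, hy, hs, ht]
        rw [mul_inv_eq_one, mul_inv_eq_iff_eq_mul]
        exact H.y_pow
      · simp only [rxWord, map_mul, map_pow, map_inv, hx, ht]
        rw [mul_inv_eq_one, mul_inv_eq_iff_eq_mul, mul_inv_eq_iff_eq_mul, mul_inv_eq_iff_eq_mul]
        exact H.x_pow
    · simp only [map_mul, map_inv, hcomm, hy, ht, mul_inv_eq_one]
      exact H.t_step j h3 hj
    · simp only [map_mul, map_pow, map_inv, ht, mul_inv_eq_one]
      exact H.t_pow j h2 hj
    · simpa using Hn n hn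

lemma isUSystem_of_hom {G : Type*} [Group G] {c α β : ℕ}
    (φ : GU c (ryWord c α) (rxWord c β) →* G) :
    IsUSystem c α β (φ (.of 0)) (φ (.of 1)) (φ (.of 2)) (fun j => φ (.of (j + 1))) ∧
      ∀ n, c + 2 ≤ n → φ (.of n) = 1 := by
  refine (lift_rels_iff (fun n => φ (.of n)) c α β).1 fun w hw => ?_
  have h : FreeGroup.lift (fun n => φ (.of n)) =
      φ.comp (PresentedGroup.mk (rels c (ryWord c α) (rxWord c β))) := by
    ext n
    simp [PresentedGroup.of]
  rw [h, MonoidHom.comp_apply, PresentedGroup.one_of_mem hw, map_one]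

/-- `GU` is generated by `x` and `y`, as seen by homomorphisms to abelian groups. -/
lemma hom_eq_one_of_commGroup {A : Type*} [CommGroup A] {c α β : ℕ}
    (φ : GU c (ryWord c α) (rxWord c β) →* A) (hx : φ (.of 0) = 1) (hy : φ (.of 1) = 1) :
    φ = 1 := by
  obtain ⟨H, Hn⟩ := isUSystem_of_hom φ
  have hcomm (g h : A) : fcomm g h = 1 := by
    rw [fcomm, mul_right_comm g⁻¹, inv_mul_cancel, one_mul, inv_mul_cancel]
  have ht := H.t_two
  have hs := H.s_eq
  have hstep := H.t_step
  simp only [hcomm] at ht hs hstep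
  ext n
  rw [MonoidHom.one_apply]
  match n with
  | 0 => exact hx
  | 1 => exact hy
  | 2 => exact hs
  | 3 => exact ht
  | n + 4 =>
    by_cases hn : n + 3 ≤ c
    · exact hstep (n + 3) (by omega) hn
    · exact Hn _ (by omega)

end GUdef

namespace EisensteinFrame

variable {R : Type*} [CommRing R] {c b : ℕ} (F : EisensteinFrame R c b)

lemma three_mul_p_pow {n : ℕ} (hn : n ≠ 0) :
    3 * F.p ^ n = 2 * F.p ^ (n + 2) + F.p ^ (n + 3) := by
  obtain ⟨k, rfl⟩ := Nat.exists_eq_add_one_of_ne_zero hn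
  linear_combination F.p ^ (k + 1) * (1 - F.p) * F.eisenstein -
    b * F.p ^ k * (1 - F.p) * F.top_mul_p

lemma three_add_sq_mul_sq :
    3 + F.p ^ 2 * (1 + F.p) ^ 2 + b * F.p ^ (c - 1) = 0 := by
  linear_combination (1 - F.p + F.p ^ 2) * F.eisenstein - b * (F.p - 1) * F.top_mul_p

lemma exists_three_eq : ∃ h, (3 : R) = F.p ^ 2 * h ∧ F.coeff₀ h = 2 := by
  have h5 := F.five_le
  refine ⟨2 + F.p - b * F.p ^ (c - 3), ?_, ?_⟩
  · have h : F.p ^ (c - 1) = F.p ^ 2 * F.p ^ (c - 3) := by rw [← pow_add]; congr 1; omega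
    linear_combination (1 - F.p) * F.eisenstein + b * F.top_mul_p - b * h
  · have h2 : F.coeff₀ 2 = 2 := map_ofNat _ 2
    simp [h2, show c - 3 ≠ 0 by omega]

lemma form_eq_zero_right {v : R} (h₀ : F.coeff₀ v = 0) (h₁ : F.coeff₁ v = 0) (u : R) :
    F.form u v = 0 := by
  simp [form, h₀, h₁]

end EisensteinFrame

namespace FrameGroup

open ZMod (threeMul)

variable {R : Type*} [CommRing R] {c b : ℕ} (F : EisensteinFrame R c b) (a : ℕ)

/-- The images in `FrameGroup F a` of the generators `x, y, s₃, t₂, t₃, …` of `GU`. -/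
def gens : ℕ → FrameGroup F a
  | 0 => ⟨1, 0⟩
  | 1 => ⟨0, 1⟩
  | 2 => ⟨F.top a, threeMul 1⟩
  | 3 => ⟨-F.p - F.top a, threeMul (-1)⟩
  | n + 4 => ⟨-F.p ^ (n + 2), threeMul 0⟩

variable {F a}

lemma gens_t {j : ℕ} (hj : 3 ≤ j) : gens F a (j + 1) = ⟨-F.p ^ (j - 1), threeMul 0⟩ := by
  obtain ⟨k, rfl⟩ := Nat.exists_eq_add_of_le hj
  rw [show 3 + k + 1 = k + 4 by omega, show 3 + k - 1 = k + 2 by omega, gens]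

lemma fcomm_mk_threeMul {u v : R} {k : ZMod 3} {s : ZMod 9} {e : ZMod 3}
    (hu : F.coeff₀ u = 0) (he : e = -(F.coeff₁ u * F.coeff₀ v)) :
    fcomm (⟨u, threeMul k⟩ : FrameGroup F a) ⟨v, s⟩ =
      ⟨(F.root s - 1) * u + F.top (a * e), threeMul e⟩ := by
  have h3 : (3 : ZMod 3) = 0 := rfl
  apply fcomm_mk
  · simp
  · simp only [form, coeff₁_mul, map_add, map_sub, map_mul, coeff₀_root, map_one, hu,
      root_threeMul, coeff₁_one]
    linear_combination he - (F.coeff₁ u * F.coeff₀ v) * h3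

lemma isUSystem_gens :
    IsUSystem c a b (gens F a 0) (gens F a 1) (gens F a 2) (fun j => gens F a (j + 1)) := by
  have h5 := F.five_le
  have h3 : (3 : ZMod 3) = 0 := rfl
  refine ⟨?_, ?_, ?_, ?_, ?_, ?_, fun j hj hjc => ?_, fun j hj hjc => ?_⟩
  · rw [show gens F a 1 = ⟨0, 1⟩ from rfl, show gens F a 0 = ⟨1, 0⟩ from rfl,
      fcomm_mk (d := -F.p) (k := -1) 0 1 1 0 (by simp [root_one])
        (by simp [form, root_one])]
    simp [gens, sub_eq_add_neg]
  · rw [show gens F a (2 + 1) = ⟨-F.p - F.top a, threeMul (-1)⟩ from rfl,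
      show gens F a 0 = ⟨1, 0⟩ from rfl,
      fcomm_mk_threeMul (e := 1) (by simp) (by simp)]
    simp [gens]
  · rw [show gens F a 2 = ⟨F.top a, threeMul 1⟩ from rfl, mk_threeMul_pow]
    have : ((3 : ℕ) : R) * F.top a = 0 := by rw [← nsmul_eq_mul, ← map_nsmul]; simp [h3]
    rw [this]
    rfl
  · rw [gens_t (by omega), gens_t (by omega), mk_threeMul_pow, mk_threeMul_pow]
    have h := F.three_mul_p_pow (n := c - 3) (by omega)
    rw [show c - 3 + 2 = c - 1 by omega, F.pow_of_le (n := c - 3 + 3) (by omega)] at h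
    rw [show c - 2 - 1 = c - 3 by omega]
    ext
    · push_cast
      linear_combination -h
    · simp
  · rw [gens_t (j := c) (by omega), mk_threeMul_pow, show gens F a 1 = ⟨0, 1⟩ from rfl,
      show gens F a 2 = ⟨F.top a, threeMul 1⟩ from rfl,
      mul_mk_of_form_eq_zero (F.form_eq_zero_right (by simp) (by simp) _),
      F.top_natCast, pow_succ, sq, mk_mul_mk, mk_mul_mk]
    ext
    · simp [form]
    · simp [form]
      decide
  · have h := F.three_add_sq_mul_sq
    rw [gens_t (by omega), gens_t (by omega), gens_t (by omega), gens_t (by omega),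
      show gens F a 0 = ⟨1, threeMul 0⟩ from rfl, mk_threeMul_pow, mk_threeMul_pow,
      mk_threeMul_pow, mul_mk_of_form_eq_zero, mul_mk_of_form_eq_zero, mul_mk_of_form_eq_zero]
    · ext
      · push_cast
        linear_combination h
      · simp
    all_goals
      apply F.form_eq_zero_right
      · simp
      · simp [F.coeff₁_p_pow, coeff₁_mul]
  · rw [show gens F a 1 = ⟨0, 1⟩ from rfl, gens_t hj]
    rcases hj.eq_or_lt with rfl | hj
    · rw [show gens F a (3 - 1 + 1) = ⟨-F.p - F.top a, threeMul (-1)⟩ from rfl,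
        fcomm_mk_threeMul (e := 0) (by simp) (by simp), root_one]
      have := F.top_mul_right a F.p
      rw [coeff₀_p, mul_zero, map_zero] at this
      ext
      · simp only [mul_zero, map_zero, Nat.reduceSub]
        linear_combination this
      · rfl
    · rw [gens_t (by omega), fcomm_mk_threeMul (e := 0) (by simp; omega) (by simp), root_one]
      ext
      · rw [show j - 1 = j - 1 - 1 + 1 by omega, pow_succ]
        simp [mul_comm]
      · rfl
  · have h := F.three_mul_p_pow (n := j - 1) (by omega)
    rw [gens_t (j := j + 2) (by omega), gens_t (j := j + 3) (by omega), mk_threeMul_pow,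
      mul_mk_of_form_eq_zero (F.form_eq_zero_right (by simp)
        (by rw [map_neg, F.coeff₁_p_pow (by omega), neg_zero]) _),
      show j + 2 - 1 = j - 1 + 2 by omega, show j + 3 - 1 = j - 1 + 3 by omega]
    rcases hj.eq_or_lt with rfl | hj
    · rw [show gens F a (2 + 1) = ⟨-F.p - F.top a, threeMul (-1)⟩ from rfl, mk_threeMul_pow]
      have ht : 3 * F.top a = 0 := by
        rw [show (3 : R) = (3 : ℕ) by norm_num, ← nsmul_eq_mul, ← map_nsmul]; simp [h3]
      ext
      · push_cast
        linear_combination -h - ht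
      · rfl
    · rw [gens_t (by omega), mk_threeMul_pow]
      ext
      · push_cast
        linear_combination -h
      · simp

end FrameGroup

namespace FrameGroup

open ZMod (threeMul)

variable {R : Type*} [CommRing R] {c b : ℕ} {F : EisensteinFrame R c b} {a : ℕ}

/-- The exponent of `y` modulo `3`. -/
def yExp (r : ZMod 9) : ZMod 3 := ZMod.castHom (show 3 ∣ 9 by norm_num) (ZMod 3) r

lemma exists_eq_threeMul {r : ZMod 9} (h : yExp r = 0) : ∃ k, r = threeMul k := by
  revert r
  decide

/-- In any solution of the relations that generates the group modulo its Frattini subgroup, `x`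
acts trivially on `R`, because `s₃` has order three. -/
lemma yExp_x_eq_zero {α β : ℕ} {u v : R} {r q : ZMod 9} {S : FrameGroup F a}
    {T : ℕ → FrameGroup F a} (H : IsUSystem c α β ⟨u, r⟩ ⟨v, q⟩ S T)
    (hdet : yExp r * F.coeff₀ v - yExp q * F.coeff₀ u ≠ 0) : yExp r = 0 := by
  have h5 := F.five_le
  have hT := H.t_two
  rw [fcomm_mk _ _ _ _ rfl rfl] at hT
  have hS := H.s_eq
  rw [hT, fcomm_mk_threeMul (by simp) rfl] at hS
  have hS3 := H.s_pow
  rw [hS, mk_threeMul_pow, one_def] at hS3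
  have h := congrArg FrameGroup.fst hS3
  obtain ⟨h₃, h3, h3c⟩ := F.exists_three_eq
  set w := (F.root r - 1) * v - (F.root q - 1) * u +
    F.top (a * (F.form (F.root r * v) u - F.form (F.root q * u) v -
      F.form (F.root q * u + v) ((F.root r - 1) * v - (F.root q - 1) * u))) with hw
  obtain ⟨w', hw', hw'c⟩ := F.exists_eq_p_mul (u := w) (by simp [hw])
  obtain ⟨g, hg, hgc⟩ := F.exists_eq_p_mul (u := F.root r - 1) (by simp)
  have hw1 : F.coeff₁ w = yExp r * F.coeff₀ v - yExp q * F.coeff₀ u := by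
    simp [hw, coeff₁_mul, yExp]
  have hg1 : F.coeff₀ g = yExp r := by simp [hgc, yExp]
  have htop (k : ZMod 3) : 3 * F.top k = 0 := by
    rw [mul_comm, top_mul_right, show F.coeff₀ 3 = 0 from map_ofNat _ 3, mul_zero, map_zero]
  have h4 : F.p ^ 4 * (h₃ * g * w') = 0 := by
    simp only [] at h
    push_cast at h
    rw [mul_add, htop, add_zero, hg, hw', h3] at h
    linear_combination h
  have := F.coeff₀_eq_zero_of_p_pow_mul (by omega) h4
  rw [map_mul, map_mul, h3c, hg1, hw'c, hw1] at this
  have h2 : (2 : ZMod 3) ≠ 0 := by decide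
  simpa [h2, hdet] using this

lemma root_identities (hodd : Odd c) {q : ZMod 9} (hq : yExp q ≠ 0) :
    (F.root q - 1) ^ (c - 1) = F.p ^ (c - 1) ∧
      3 + (F.root q - 1) ^ 2 * F.root q ^ 2 + b * F.p ^ (c - 1) = 0 ∧
      1 + F.root q + F.root q ^ 2 = -(b * F.p ^ (c - 1)) := by
  have h3 := F.one_add_p_pow_three
  have hP := F.three_add_sq_mul_sq
  have hE := F.eisenstein
  have hcases : ∀ x : ZMod 3, x ≠ 0 → x.val = 1 ∨ x.val = 2 := by decide
  rw [F.root_mod_three q]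
  rcases hcases _ hq with h | h <;> rw [yExp] at h <;> rw [h]
  · refine ⟨by ring, by linear_combination hP, by linear_combination hE⟩
  · refine ⟨?_, ?_, ?_⟩
    · rw [show (1 + F.p) ^ 2 - 1 = F.p * (2 + F.p) by ring, mul_pow, top_mul, map_pow, map_add,
        coeff₀_p, add_zero, show F.coeff₀ 2 = -1 from map_ofNat _ 2,
        (Nat.Odd.sub_odd hodd odd_one).neg_one_pow, top_one]
    · linear_combination hP + ((1 + F.p) ^ 5 + (1 + F.p) ^ 2 - 2 * (1 + F.p) ^ 3) * h3
    · linear_combination hE + (1 + F.p) * h3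

lemma exponents_congr (hodd : Odd c) {α β : ℕ} {u v : R} {r q : ZMod 9} {S : FrameGroup F a}
    {T : ℕ → FrameGroup F a} (H : IsUSystem c α β ⟨u, r⟩ ⟨v, q⟩ S T)
    (hdet : yExp r * F.coeff₀ v - yExp q * F.coeff₀ u ≠ 0) :
    (β : ZMod 3) = b ∧ F.coeff₀ u ≠ 0 ∧ yExp q ≠ 0 ∧
      (α : ZMod 3) * F.coeff₀ u = a * (yExp q * F.coeff₀ u ^ 2) := by
  have h5 := F.five_le
  have hr := yExp_x_eq_zero H hdet
  obtain ⟨r, rfl⟩ := exists_eq_threeMul hr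
  rw [hr, zero_mul, zero_sub, neg_ne_zero, mul_ne_zero_iff] at hdet
  obtain ⟨hq, hu⟩ := hdet
  obtain ⟨hPc, hP2, hP3⟩ := root_identities (F := F) hodd hq
  have hthree : (3 : ZMod 3) = 0 := rfl
  set P := F.root q - 1 with hPdef
  have hPz : F.coeff₀ P = 0 := by simp [hPdef]
  have hPq : F.coeff₁ P = yExp q := by simp [hPdef, yExp]
  have hPtop (k : ZMod 3) : P * F.top k = 0 := by
    rw [mul_comm, top_mul_right, hPz, mul_zero, map_zero]
  obtain ⟨k, hT2⟩ : ∃ k : ZMod 3, T 2 = ⟨-(P * u) + F.top (a * k), threeMul k⟩ := by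
    refine ⟨_, H.t_two.trans (fcomm_mk _ _ _ _ ?_ rfl)⟩
    simp [hPdef]
  set w := -(P * u) + F.top (a * k) with hw
  have hw0 : F.coeff₀ w = 0 := by simp [hw, hPz]
  have hw1 : F.coeff₁ w = -(yExp q * F.coeff₀ u) := by simp [hw, coeff₁_mul, hPz, hPq]
  have hS := H.s_eq
  rw [hT2, fcomm_mk_threeMul hw0 rfl, hw1, root_threeMul, sub_self, zero_mul, zero_add] at hS
  obtain ⟨e, he, hT3⟩ : ∃ e, e = -(F.coeff₁ w * F.coeff₀ v) ∧
      T 3 = ⟨-(P ^ 2 * u) + F.top (a * e), threeMul e⟩ := by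
    refine ⟨_, rfl, ?_⟩
    rw [H.t_step 3 le_rfl (by omega), show 3 - 1 = 2 from rfl, hT2, fcomm_mk_threeMul hw0 rfl]
    ext
    · change P * w + _ = _
      rw [hw]
      linear_combination hPtop (a * k)
    · rfl
  have hdeep (n : ℕ) (hn : 2 ≤ n) : F.coeff₀ (-(P ^ n * u)) = 0 ∧ F.coeff₁ (-(P ^ n * u)) = 0 := by
    obtain ⟨m, rfl⟩ := Nat.exists_eq_add_of_le hn
    rw [pow_add, sq]
    simp [coeff₁_mul, hPz]
  have hd : F.coeff₀ (-(P ^ 2 * u) + F.top (a * e)) = 0 ∧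
      F.coeff₁ (-(P ^ 2 * u) + F.top (a * e)) = 0 := by
    rw [map_add, map_add, (hdeep 2 le_rfl).1, (hdeep 2 le_rfl).2, coeff₀_top, coeff₁_top, add_zero]
    exact ⟨rfl, rfl⟩
  have hT (j : ℕ) (hj : 4 ≤ j) (hjc : j ≤ c) : T j = ⟨-(P ^ (j - 1) * u), threeMul 0⟩ := by
    induction j, hj using Nat.le_induction with
    | base =>
      rw [H.t_step 4 (by omega) hjc, show 4 - 1 = 3 from rfl, hT3,
        fcomm_mk_threeMul (e := 0) hd.1 (by rw [hd.2, zero_mul, neg_zero])]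
      ext
      · change P * (-(P ^ 2 * u) + F.top (a * e)) + _ = _
        rw [mul_zero, map_zero]
        linear_combination hPtop (a * e)
      · rfl
    | succ j hj ih =>
      obtain ⟨h0, h1⟩ := hdeep (j - 1) (by omega)
      rw [H.t_step (j + 1) (by omega) hjc, Nat.add_sub_cancel, ih (by omega),
        fcomm_mk_threeMul (e := 0) h0 (by rw [h1]; simp)]
      ext
      · change P * _ + _ = _
        rw [mul_zero, map_zero, show P ^ j = P ^ (j - 1) * P by rw [← pow_succ]; congr 1; omega]
        ring
      · rfl
  have hX := H.x_pow
  rw [hT c (by omega) le_rfl, hT 5 (by omega) h5, hT 4 le_rfl (by omega), hT3, mk_threeMul_pow,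
    mk_threeMul_pow, mk_threeMul_pow, mul_mk_of_form_eq_zero, mul_mk_of_form_eq_zero,
    mul_mk_of_form_eq_zero, hPc, FrameGroup.mk.injEq] at hX
  rotate_left
  · exact F.form_eq_zero_right (hdeep _ (by omega)).1 (hdeep _ (by omega)).2 _
  · refine F.form_eq_zero_right ?_ ?_ _
    · rw [map_mul, (hdeep _ (by omega)).1, mul_zero]
    · rw [coeff₁_mul, coeff₁_natCast, (hdeep _ (by omega)).2, mul_zero, zero_mul, add_zero]
  · exact F.form_eq_zero_right hd.1 hd.2 _
  obtain ⟨hX1, hX2⟩ := hX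
  have he0 : e = 0 := by
    apply ZMod.threeMul_injective
    simpa [hthree] using hX2.symm
  have hv : F.coeff₀ v = 0 := by
    rw [he0, hw1] at he
    simpa [hq, hu] using he
  have hβ : F.top (((β : ZMod 3) - b) * F.coeff₀ u) = 0 := by
    rw [← F.top_mul_right, map_sub, F.top_natCast, F.top_natCast]
    rw [he0, mul_zero (a : ZMod 3), map_zero F.top] at hX1
    have hroot : F.root q = P + 1 := by rw [hPdef]; ring
    rw [hroot] at hP2
    push_cast at hX1
    linear_combination hX1 - u * hP2
  have hβ' := F.top_eq_zero hβ
  refine ⟨sub_eq_zero.1 ((mul_eq_zero.1 hβ').resolve_right hu), hu, hq, ?_⟩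
  have hY := H.y_pow
  have hroot1 (x : R) : F.form x v = - (F.coeff₀ x * F.coeff₁ v) := by simp [form, hv]
  rw [hT c (by omega) le_rfl, hS, mk_threeMul_pow, hPc,
    mul_mk_of_form_eq_zero (F.form_eq_zero_right (by simp) (by simp) _), pow_succ, sq, mk_mul_mk,
    mk_mul_mk] at hY
  have hY1 := congrArg FrameGroup.fst hY
  simp only [hroot1, map_add, map_mul, hv, coeff₀_root, mul_zero, zero_mul, neg_zero, map_zero,
    add_zero] at hY1
  have hvτ : F.p ^ (c - 1) * v = 0 := by rw [top_mul, hv, map_zero]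
  have hα : F.top (α * F.coeff₀ u - a * (yExp q * F.coeff₀ u ^ 2)) = 0 := by
    rw [map_sub, ← F.top_mul_right, F.top_natCast]
    rw [show a * (yExp q * F.coeff₀ u ^ 2) = a * -(-(yExp q * F.coeff₀ u) * F.coeff₀ u) by ring]
    linear_combination hY1 - v * hP3 + b * hvτ
  exact sub_eq_zero.1 (F.top_eq_zero hα)

/-- The linear combinations of the two coordinates of `FrameGroup F a` modulo its Frattini
subgroup. -/
def linearHom (F : EisensteinFrame R c b) (a : ℕ) (m n : ZMod 3) :
    FrameGroup F a →* Multiplicative (ZMod 3) where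
  toFun g := .ofAdd (m * yExp g.snd + n * F.coeff₀ g.fst)
  map_one' := by simp [one_def, yExp]
  map_mul' := by
    rintro ⟨u, r⟩ ⟨v, s⟩
    have h (k : ZMod 3) : yExp (threeMul k) = 0 := by revert k; decide
    rw [mk_mul_mk, ← ofAdd_add]
    congr 1
    simp only [yExp, map_add, map_mul, coeff₀_root, coeff₀_top] at h ⊢
    rw [h]
    ring

/-- The representation of `GU` on the model group. -/
noncomputable def ofGU (F : EisensteinFrame R c b) (a : ℕ) :
    GU c (ryWord c a) (rxWord c b) →* FrameGroup F a :=
  PresentedGroup.toGroup ((lift_rels_iff (gens F a) c a b).2 ⟨isUSystem_gens, fun n hn => by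
    have h5 := F.five_le
    obtain ⟨j, rfl⟩ : ∃ j, n = j + 1 := ⟨n - 1, by omega⟩
    rw [gens_t (by omega), F.pow_of_le (by omega), neg_zero, map_zero, one_def]⟩)

lemma ofGU_of (n : ℕ) : ofGU F a (.of n) = gens F a n := PresentedGroup.toGroup.of _

/-- An isomorphism onto `GU` sends `x` and `y` to a basis modulo the Frattini subgroup. -/
lemma det_ne_zero {α β : ℕ} (e : GU c (ryWord c α) (rxWord c β) ≃* GU c (ryWord c a) (rxWord c b))
    {u v : R} {r q : ZMod 9} (hx : ofGU F a (e (.of 0)) = ⟨u, r⟩)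
    (hy : ofGU F a (e (.of 1)) = ⟨v, q⟩) :
    yExp r * F.coeff₀ v - yExp q * F.coeff₀ u ≠ 0 := by
  have hlin : ∀ r u q v : ZMod 3, (∀ m n, m * r + n * u = 0 → m * q + n * v = 0 → m = 0 ∧ n = 0) →
      r * v - q * u ≠ 0 := by
    decide
  refine hlin _ _ _ _ fun m n h0 h1 => ?_
  have h := hom_eq_one_of_commGroup (((linearHom F a m n).comp (ofGU F a)).comp e.toMonoidHom)
    ((congrArg (linearHom F a m n) hx).trans (congrArg Multiplicative.ofAdd h0))
    ((congrArg (linearHom F a m n) hy).trans (congrArg Multiplicative.ofAdd h1))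
  have hgen (i : ℕ) : linearHom F a m n (gens F a i) = 1 := by
    simpa [ofGU_of] using DFunLike.congr_fun h (e.symm (.of i))
  have hm : m * yExp 1 + n * F.coeff₀ 0 = 0 := hgen 1
  have hn : m * yExp 0 + n * F.coeff₀ 1 = 0 := hgen 0
  exact ⟨by simpa [yExp] using hm, by simpa [yExp] using hn⟩

end FrameGroup

lemma GUdef.exponents_eq_of_mulEquiv {c : ℕ} (hc : 5 ≤ c) (hodd : Odd c) {α β a b : ℕ}
    (hα : α < 2) (hβ : β < 3) (ha : a < 2) (hb : b < 3)
    (e : GU c (ryWord c α) (rxWord c β) ≃* GU c (ryWord c a) (rxWord c b)) : α = a ∧ β = b := by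
  obtain ⟨R, _, ⟨F⟩⟩ := EisensteinFrame.exists_frame c b hc hodd
  have H := (isUSystem_of_hom ((FrameGroup.ofGU F a).comp e.toMonoidHom)).1
  rcases hx : FrameGroup.ofGU F a (e (.of 0)) with ⟨u, r⟩
  rcases hy : FrameGroup.ofGU F a (e (.of 1)) with ⟨v, q⟩
  simp only [MonoidHom.comp_apply, MulEquiv.toMonoidHom_eq_coe, MonoidHom.coe_coe, hx, hy] at H
  obtain ⟨hβb, hu, hq, hαa⟩ :=
    FrameGroup.exponents_congr hodd H (FrameGroup.det_ne_zero e hx hy)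
  constructor
  · interval_cases α <;> interval_cases a <;> simp_all
  · rwa [ZMod.natCast_eq_natCast_iff, Nat.ModEq, Nat.mod_eq_of_lt hβ, Nat.mod_eq_of_lt hb] at hβb

theorem GU_pairwise_nonisomorphic_of_odd (c : ℕ) (hc : 5 ≤ c) (hodd : Odd c) :
    ∀ Ry ∈ RySet c, ∀ Rx ∈ RxSet c, ∀ Ry' ∈ RySet c, ∀ Rx' ∈ RxSet c,
      (Ry, Rx) ≠ (Ry', Rx') →
        IsEmpty (GU c Ry Rx ≃* GU c Ry' Rx') := by
  intro Ry hRy Rx hRx Ry' hRy' Rx' hRx' hne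
  obtain ⟨α, hα, rfl⟩ := exists_eq_ryWord hRy
  obtain ⟨β, hβ, rfl⟩ := exists_eq_rxWord hRx
  obtain ⟨a, ha, rfl⟩ := exists_eq_ryWord hRy'
  obtain ⟨b, hb, rfl⟩ := exists_eq_rxWord hRx'
  refine ⟨fun e => hne ?_⟩
  obtain ⟨rfl, rfl⟩ := GUdef.exponents_eq_of_mulEquiv hc hodd hα hβ ha hb e
  rfl
end
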